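/- arXiv:0903.0444 — 3 statements merged into one kernel-verified Lean document; each statement's English description precedes it below -/
import Mathlib

section
/- Let A be a real 2×2 matrix with det A < 0, so A has real eigenvalues λ₁ > 0 > λ₂. A proper cone K ⊆ ℝ² is A-invariant if and only if there exist an eigenvector u₁ of A for λ₁, an eigenvector u₂ of A for λ₂, and real numbers c₁ > 0 > c₂ satisfying λ₁/λ₂ ≤ c₁/c₂ ≤ λ₂/λ₁, such that K = Cone{u₁ + c₁u₂, u₁ + c₂u₂}. -/
/-- A set `K ⊆ ℝ^m` is a proper cone: closed under nonnegative scaling,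
convex (closed under addition), topologically closed, pointed and solid. -/
def IsProperCone {m : ℕ} (K : Set (Fin m → ℝ)) : Prop :=
  (∀ a : ℝ, 0 ≤ a → ∀ x ∈ K, a • x ∈ K) ∧
  (∀ x ∈ K, ∀ y ∈ K, x + y ∈ K) ∧
  IsClosed K ∧ K ∩ (-K) = {0} ∧ (interior K).Nonempty

/-- `K` is invariant under the matrix `A`. -/
def InvariantUnder {m : ℕ} (A : Matrix (Fin m) (Fin m) ℝ) (K : Set (Fin m → ℝ)) : Prop :=
  ∀ x ∈ K, A.mulVec x ∈ K

/-- `coneGen X` is the smallest convex cone containing `X`. -/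
def coneGen {m : ℕ} (X : Set (Fin m → ℝ)) : Set (Fin m → ℝ) :=
  ⋂₀ {K : Set (Fin m → ℝ) |
    (∀ a : ℝ, 0 ≤ a → ∀ x ∈ K, a • x ∈ K) ∧ (∀ x ∈ K, ∀ y ∈ K, x + y ∈ K) ∧ X ⊆ K}

/-!
Since `f u₂ = l₂ • u₂` with `l₂ < 0`, an invariant salient cone `C` contains neither `u₂` nor
`-u₂`. If `x` is interior to `C`, so is `f x - l₂ • x`, and in dimension two this is an eigenvector
`u₁` for `l₁`. The line `u₁ + ℝ u₂` therefore meets `C` in a segment whose endpoints `u₁ + c₁ • u₂`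
and `u₁ + c₂ • u₂` lie on either side of `u₁`, and these endpoints generate `C`. In the coordinates
`a • u₁ + b • u₂` the cone is `c₂ * a ≤ b ≤ c₁ * a` and `f` is `diag(l₁, l₂)`; testing invariance on
the two generators gives the bounds on `c₁ / c₂`.
-/

open Filter Module Set Topology
open scoped Pointwise

section Eigenvectors

lemma hasEigenvector_neg {R M : Type*} [CommRing R] [AddCommGroup M] [Module R M] {f : End R M}
    {μ : R} {u : M} (hu : f.HasEigenvector μ u) : f.HasEigenvector μ (-u) :=
  ⟨neg_mem hu.1, neg_ne_zero.2 hu.2⟩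

lemma hasEigenvector_mulVecLin_iff {R n : Type*} [CommRing R] [Fintype n] {A : Matrix n n R} {μ : R}
    {u : n → R} : End.HasEigenvector A.mulVecLin μ u ↔ u ≠ 0 ∧ A.mulVec u = μ • u := by
  rw [End.hasEigenvector_iff, End.mem_eigenspace_iff, Matrix.mulVecLin_apply, and_comm]

lemma linearIndependent_pair_of_hasEigenvector {R M : Type*} [CommRing R] [IsDomain R]
    [AddCommGroup M] [Module R M] [IsTorsionFree R M] {f : End R M} {μ ν : R} {u v : M}
    (hμν : μ ≠ ν) (hu : f.HasEigenvector μ u) (hv : f.HasEigenvector ν v) :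
    LinearIndependent R ![u, v] :=
  f.eigenvectors_linearIndependent' ![μ, ν] (injective_pair_iff_ne.2 hμν) _
    (Fin.forall_fin_two.2 ⟨hu, hv⟩)

lemma span_pair_eq_top_of_hasEigenvector {K V : Type*} [Field K] [AddCommGroup V] [Module K V]
    {f : End K V} {μ ν : K} {u v : V} (hV : finrank K V = 2) (hμν : μ ≠ ν)
    (hu : f.HasEigenvector μ u) (hv : f.HasEigenvector ν v) : Submodule.span K {u, v} = ⊤ := by
  have hli := linearIndependent_pair_of_hasEigenvector hμν hu hv
  rw [← Matrix.range_cons_cons_empty u v ![], hli.span_eq_top_of_card_eq_finrank (by simp [hV])]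

end Eigenvectors

section Interior

variable {𝕜 E : Type*} [Field 𝕜] [LinearOrder 𝕜] [IsStrictOrderedRing 𝕜] [AddCommGroup E]
  [Module 𝕜 E] [TopologicalSpace E]

lemma exists_pos_add_smul_mem_of_mem_interior [TopologicalSpace 𝕜] [OrderTopology 𝕜]
    [ContinuousAdd E] [ContinuousSMul 𝕜 E] {s : Set E} {x : E} (hx : x ∈ interior s) (v : E) :
    ∃ c : 𝕜, 0 < c ∧ x + c • v ∈ s := by
  have hcont : Continuous fun c : 𝕜 ↦ x + c • v := by fun_prop
  have hlim : Tendsto (fun c : 𝕜 ↦ x + c • v) (𝓝[>] 0) (𝓝 x) :=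
    (hcont.tendsto' 0 x (by simp)).mono_left nhdsWithin_le_nhds
  have hmem := hlim.eventually (mem_interior_iff_mem_nhds.1 hx)
  exact (eventually_mem_nhdsWithin.and hmem).exists

lemma add_mem_interior_pointedCone {R M : Type*} [Semiring R] [PartialOrder R] [IsOrderedRing R]
    [AddCommGroup M] [Module R M] [TopologicalSpace M] [ContinuousAdd M] {C : PointedCone R M}
    {x y : M} (hx : x ∈ C) (hy : y ∈ interior (C : Set M)) : x + y ∈ interior (C : Set M) := by
  have hsub : (C : Set M) + (C : Set M) ⊆ (C : Set M) :=
    add_subset_iff.2 fun _ hx _ hy ↦ C.add_mem hx hy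
  exact interior_mono hsub (subset_interior_add_right (add_mem_add hx hy))

lemma smul_mem_interior_pointedCone [ContinuousConstSMul 𝕜 E] {C : PointedCone 𝕜 E} {x : E} {r : 𝕜}
    (hr : 0 < r) (hx : x ∈ interior (C : Set E)) : r • x ∈ interior (C : Set E) := by
  have hsub : r • (C : Set E) ⊆ (C : Set E) :=
    smul_set_subset_iff.2 fun _ hx ↦ C.smul_mem hr.le hx
  refine interior_mono hsub ?_
  rw [interior_smul₀ hr.ne']
  exact smul_mem_smul_set hx

end Interior

section HullPair

variable {𝕜 E : Type*} [Field 𝕜] [LinearOrder 𝕜] [IsStrictOrderedRing 𝕜] [AddCommGroup E]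
  [Module 𝕜 E] {u₁ u₂ : E} {a b c₁ c₂ : 𝕜}

lemma smul_add_smul_mem_hull_pair (hc : c₂ < c₁) (h₂ : c₂ * a ≤ b) (h₁ : b ≤ c₁ * a) :
    a • u₁ + b • u₂ ∈ PointedCone.hull 𝕜 {u₁ + c₁ • u₂, u₁ + c₂ • u₂} := by
  have hd : 0 < c₁ - c₂ := sub_pos.2 hc
  refine Submodule.mem_span_pair.2
    ⟨⟨(b - c₂ * a) / (c₁ - c₂), div_nonneg (sub_nonneg.2 h₂) hd.le⟩,
      ⟨(c₁ * a - b) / (c₁ - c₂), div_nonneg (sub_nonneg.2 h₁) hd.le⟩, ?_⟩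
  simp only [Nonneg.mk_smul]
  match_scalars <;> field_simp <;> ring

lemma smul_add_smul_mem_hull_pair_iff (hu : LinearIndependent 𝕜 ![u₁, u₂]) (hc : c₂ < c₁) :
    a • u₁ + b • u₂ ∈ PointedCone.hull 𝕜 {u₁ + c₁ • u₂, u₁ + c₂ • u₂} ↔
      c₂ * a ≤ b ∧ b ≤ c₁ * a := by
  refine ⟨fun h ↦ ?_, fun h ↦ smul_add_smul_mem_hull_pair hc h.1 h.2⟩
  obtain ⟨⟨s, hs⟩, ⟨t, ht⟩, hst⟩ := Submodule.mem_span_pair.1 h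
  have hcoord : (s + t) • u₁ + (s * c₁ + t * c₂) • u₂ = a • u₁ + b • u₂ := by
    rw [← hst]
    simp only [Nonneg.mk_smul]
    module
  obtain ⟨rfl, rfl⟩ := hu.eq_of_pair hcoord
  exact ⟨by linarith [mul_le_mul_of_nonneg_left hc.le hs],
    by linarith [mul_le_mul_of_nonneg_left hc.le ht]⟩

lemma mapsTo_hull_iff {R M : Type*} [Semiring R] [PartialOrder R] [IsOrderedRing R]
    [AddCommMonoid M] [Module R M] {f : End R M} {s : Set M} {C : PointedCone R M} :
    MapsTo f (PointedCone.hull R s) C ↔ MapsTo f s C :=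
  Submodule.span_le (p := C.comap f)

lemma mapsTo_hull_pair_iff {f : End 𝕜 E} {l₁ l₂ : 𝕜} (hu : LinearIndependent 𝕜 ![u₁, u₂])
    (hfu₁ : f u₁ = l₁ • u₁) (hfu₂ : f u₂ = l₂ • u₂) (hl₁ : 0 < l₁) (hl₂ : l₂ < 0)
    (hc₁ : 0 < c₁) (hc₂ : c₂ < 0) :
    MapsTo f (PointedCone.hull 𝕜 {u₁ + c₁ • u₂, u₁ + c₂ • u₂})
        (PointedCone.hull 𝕜 {u₁ + c₁ • u₂, u₁ + c₂ • u₂}) ↔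
      l₁ / l₂ ≤ c₁ / c₂ ∧ c₁ / c₂ ≤ l₂ / l₁ := by
  have hf (c : 𝕜) : f (u₁ + c • u₂) = l₁ • u₁ + (c * l₂) • u₂ := by
    rw [map_add, map_smul, hfu₁, hfu₂, smul_smul]
  have hlower : l₁ / l₂ ≤ c₁ / c₂ ↔ c₂ * l₁ ≤ c₁ * l₂ := by
    rw [le_div_iff_of_neg hc₂, div_mul_eq_mul_div, le_div_iff_of_neg hl₂, mul_comm l₁]
  have hupper : c₁ / c₂ ≤ l₂ / l₁ ↔ c₂ * l₂ ≤ c₁ * l₁ := by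
    rw [div_le_iff_of_neg hc₂, div_mul_eq_mul_div, div_le_iff₀ hl₁, mul_comm l₂]
  have hle₁ : c₁ * l₂ ≤ c₁ * l₁ := mul_le_mul_of_nonneg_left (hl₂.trans hl₁).le hc₁.le
  have hle₂ : c₂ * l₁ ≤ c₂ * l₂ := mul_le_mul_of_nonpos_left (hl₂.trans hl₁).le hc₂.le
  rw [mapsTo_hull_iff]
  simp only [MapsTo, mem_insert_iff, mem_singleton_iff, forall_eq_or_imp,
    forall_eq, hf, SetLike.mem_coe, smul_add_smul_mem_hull_pair_iff hu (hc₂.trans hc₁)]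
  tauto

end HullPair

section Slice

lemma bddAbove_setOf_add_smul_mem {𝕜 E : Type*} [Field 𝕜] [LinearOrder 𝕜] [IsStrictOrderedRing 𝕜]
    [TopologicalSpace 𝕜] [OrderTopology 𝕜] [AddCommGroup E] [Module 𝕜 E] [TopologicalSpace E]
    [ContinuousAdd E] [ContinuousSMul 𝕜 E] {C : PointedCone 𝕜 E} {v : E}
    (hC : IsClosed (C : Set E)) (hv : v ∉ C) (u : E) : BddAbove {c : 𝕜 | u + c • v ∈ C} := by
  contrapose! hv
  have hfreq : ∃ᶠ c : 𝕜 in atTop, c⁻¹ • u + v ∈ (C : Set E) := by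
    refine frequently_atTop.2 fun r ↦ ?_
    obtain ⟨c, hc, hrc⟩ := not_bddAbove_iff.1 hv (max r 0)
    have hc₀ : 0 < c := (le_max_right r 0).trans_lt hrc
    refine ⟨c, (le_max_left r 0).trans hrc.le, ?_⟩
    simpa [smul_smul, hc₀.ne'] using C.smul_mem (inv_nonneg.2 hc₀.le) hc
  have hlim : Tendsto (fun c : 𝕜 ↦ c⁻¹ • u + v) atTop (𝓝 v) := by
    simpa using ((tendsto_inv_atTop_zero (𝕜 := 𝕜)).smul_const u).add_const v
  exact hC.mem_of_frequently_of_tendsto hfreq hlim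

lemma le_mul_of_smul_add_smul_mem {𝕜 E : Type*} [Field 𝕜] [LinearOrder 𝕜] [IsStrictOrderedRing 𝕜]
    [AddCommGroup E] [Module 𝕜 E] {C : PointedCone 𝕜 E} {u v : E} {a b c : 𝕜}
    (hc : IsGreatest {c : 𝕜 | u + c • v ∈ C} c) (h : a • u + b • v ∈ C) : b ≤ c * a := by
  -- Adding `t • (u + c • v)` keeps `b - c * a` fixed and can make the coefficient of `u` positive.
  obtain ⟨t, ht₀, hat⟩ : ∃ t : 𝕜, 0 ≤ t ∧ 0 < a + t :=
    ⟨|a| + 1, by positivity, by linarith [neg_abs_le a]⟩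
  have hmem : (a + t)⁻¹ • ((a • u + b • v) + t • (u + c • v)) ∈ C :=
    C.smul_mem (inv_nonneg.2 hat.le) (C.add_mem h (C.smul_mem ht₀ hc.1))
  have hslice : u + ((b + c * t) / (a + t)) • v ∈ C := by
    convert hmem using 1
    match_scalars <;> field_simp
  have hle : b + c * t ≤ c * (a + t) := (div_le_iff₀ hat).1 (hc.2 hslice)
  linarith

variable {E : Type*} [AddCommGroup E] [Module ℝ E] [TopologicalSpace E] [ContinuousAdd E]
  [ContinuousSMul ℝ E] {C : PointedCone ℝ E}

lemma exists_pos_isGreatest_setOf_add_smul_mem {u v : E} (hC : IsClosed (C : Set E))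
    (hu : u ∈ interior (C : Set E)) (hv : v ∉ C) :
    ∃ c : ℝ, 0 < c ∧ IsGreatest {c : ℝ | u + c • v ∈ C} c := by
  obtain ⟨c, hc₀, hc⟩ := exists_pos_add_smul_mem_of_mem_interior (𝕜 := ℝ) hu v
  have hbdd := bddAbove_setOf_add_smul_mem hC hv u
  have hcont : Continuous fun c : ℝ ↦ u + c • v := by fun_prop
  exact ⟨_, hc₀.trans_le (le_csSup hbdd hc), (hC.preimage hcont).isGreatest_csSup ⟨c, hc⟩ hbdd⟩

lemma exists_eq_hull_pair {u₁ u₂ : E} (hC : IsClosed (C : Set E))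
    (hu₁ : u₁ ∈ interior (C : Set E)) (hu₂ : u₂ ∉ C) (hneg : -u₂ ∉ C)
    (hspan : Submodule.span ℝ {u₁, u₂} = ⊤) :
    ∃ c₁ c₂ : ℝ, 0 < c₁ ∧ c₂ < 0 ∧ C = PointedCone.hull ℝ {u₁ + c₁ • u₂, u₁ + c₂ • u₂} := by
  obtain ⟨c₁, hc₁, hmax⟩ := exists_pos_isGreatest_setOf_add_smul_mem hC hu₁ hu₂
  obtain ⟨c, hc, hmax_neg⟩ := exists_pos_isGreatest_setOf_add_smul_mem hC hu₁ hneg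
  refine ⟨c₁, -c, hc₁, neg_neg_of_pos hc, le_antisymm (fun x hx ↦ ?_) ?_⟩
  · obtain ⟨a, b, rfl⟩ := Submodule.mem_span_pair.1 (hspan ▸ Submodule.mem_top : x ∈ _)
    have hle : b ≤ c₁ * a := le_mul_of_smul_add_smul_mem hmax hx
    have hge : -b ≤ c * a := le_mul_of_smul_add_smul_mem hmax_neg (by simpa using hx)
    exact smul_add_smul_mem_hull_pair (by linarith) (by linarith) hle
  · exact Submodule.span_le.2 (pair_subset hmax.1 (by simpa using hmax_neg.1))

end Slice

section Invariant

lemma notMem_of_hasEigenvector_of_neg {𝕜 E : Type*} [Field 𝕜] [LinearOrder 𝕜]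
    [IsStrictOrderedRing 𝕜] [AddCommGroup E] [Module 𝕜 E] {f : End 𝕜 E} {C : PointedCone 𝕜 E}
    {l : 𝕜} {u : E} (hsal : (C : ConvexCone 𝕜 E).Salient) (hf : MapsTo f C C) (hl : l < 0)
    (hu : f.HasEigenvector l u) : u ∉ C := by
  intro hmem
  have hneg : (-l) • -u ∈ C := by simpa [hu.apply_eq_smul] using hf hmem
  exact hsal u hmem hu.2 ((C.smul_mem_iff (neg_pos.2 hl)).1 hneg)

lemma apply_sub_smul_mem_interior {𝕜 E : Type*} [Field 𝕜] [LinearOrder 𝕜]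
    [IsStrictOrderedRing 𝕜] [AddCommGroup E] [Module 𝕜 E] [TopologicalSpace E] [ContinuousAdd E]
    [ContinuousConstSMul 𝕜 E] {f : E → E} {C : PointedCone 𝕜 E} {l : 𝕜} {x : E}
    (hf : MapsTo f C C) (hl : l < 0) (hx : x ∈ interior (C : Set E)) :
    f x - l • x ∈ interior (C : Set E) := by
  simpa [sub_eq_add_neg] using add_mem_interior_pointedCone (hf (interior_subset hx))
    (smul_mem_interior_pointedCone (neg_pos.2 hl) hx)

variable {E : Type*} [AddCommGroup E] [Module ℝ E] [TopologicalSpace E] [ContinuousAdd E]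
  [ContinuousSMul ℝ E] {f : End ℝ E} {l₁ l₂ : ℝ} {C : PointedCone ℝ E}

lemma exists_hasEigenvector_mem_interior {u₁ u₂ : E} (hsal : (C : ConvexCone ℝ E).Salient)
    (hsolid : (interior (C : Set E)).Nonempty) (hf : MapsTo f C C) (hl₂ : l₂ < 0)
    (hu₁ : f.HasEigenvector l₁ u₁) (hu₂ : f.HasEigenvector l₂ u₂)
    (hspan : Submodule.span ℝ {u₁, u₂} = ⊤) :
    ∃ u ∈ interior (C : Set E), f.HasEigenvector l₁ u := by
  obtain ⟨x, hx⟩ := hsolid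
  have hint : f x - l₂ • x ∈ interior (C : Set E) := apply_sub_smul_mem_interior hf hl₂ hx
  refine ⟨f x - l₂ • x, hint, ?_, fun hzero ↦ ?_⟩
  · obtain ⟨a, b, rfl⟩ := Submodule.mem_span_pair.1 (hspan ▸ Submodule.mem_top : x ∈ _)
    rw [End.mem_eigenspace_iff]
    simp only [map_add, map_sub, map_smul, hu₁.apply_eq_smul, hu₂.apply_eq_smul]
    module
  · obtain ⟨c, hc, hmem⟩ := exists_pos_add_smul_mem_of_mem_interior (𝕜 := ℝ) (hzero ▸ hint) u₂
    rw [zero_add] at hmem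
    exact notMem_of_hasEigenvector_of_neg hsal hf hl₂ hu₂ ((C.smul_mem_iff hc).1 hmem)

theorem invariant_iff_of_negative_determinant_general (hE : finrank ℝ E = 2) (hl₁ : 0 < l₁)
    (hl₂ : l₂ < 0) (he₁ : ∃ u, f.HasEigenvector l₁ u) (he₂ : ∃ u, f.HasEigenvector l₂ u)
    (hC : IsClosed (C : Set E)) (hsal : (C : ConvexCone ℝ E).Salient)
    (hsolid : (interior (C : Set E)).Nonempty) :
    MapsTo f C C ↔
      ∃ (u₁ u₂ : E) (c₁ c₂ : ℝ),
        f.HasEigenvector l₁ u₁ ∧ f.HasEigenvector l₂ u₂ ∧ 0 < c₁ ∧ c₂ < 0 ∧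
        l₁ / l₂ ≤ c₁ / c₂ ∧ c₁ / c₂ ≤ l₂ / l₁ ∧
        C = PointedCone.hull ℝ {u₁ + c₁ • u₂, u₁ + c₂ • u₂} := by
  have hl : l₁ ≠ l₂ := (hl₂.trans hl₁).ne'
  constructor
  · intro hf
    obtain ⟨v₁, hv₁⟩ := he₁
    obtain ⟨u₂, hu₂⟩ := he₂
    obtain ⟨u₁, hint, hu₁⟩ := exists_hasEigenvector_mem_interior hsal hsolid hf hl₂ hv₁ hu₂
      (span_pair_eq_top_of_hasEigenvector hE hl hv₁ hu₂)
    obtain ⟨c₁, c₂, hc₁, hc₂, rfl⟩ := exists_eq_hull_pair hC hint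
      (notMem_of_hasEigenvector_of_neg hsal hf hl₂ hu₂)
      (notMem_of_hasEigenvector_of_neg hsal hf hl₂ (hasEigenvector_neg hu₂))
      (span_pair_eq_top_of_hasEigenvector hE hl hu₁ hu₂)
    obtain ⟨hlower, hupper⟩ :=
      (mapsTo_hull_pair_iff (linearIndependent_pair_of_hasEigenvector hl hu₁ hu₂)
        hu₁.apply_eq_smul hu₂.apply_eq_smul hl₁ hl₂ hc₁ hc₂).1 hf
    exact ⟨u₁, u₂, c₁, c₂, hu₁, hu₂, hc₁, hc₂, hlower, hupper, rfl⟩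
  · rintro ⟨u₁, u₂, c₁, c₂, hu₁, hu₂, hc₁, hc₂, hlower, hupper, rfl⟩
    exact (mapsTo_hull_pair_iff (linearIndependent_pair_of_hasEigenvector hl hu₁ hu₂)
      hu₁.apply_eq_smul hu₂.apply_eq_smul hl₁ hl₂ hc₁ hc₂).2 ⟨hlower, hupper⟩

end Invariant

lemma IsProperCone.exists_pointedCone {m : ℕ} {K : Set (Fin m → ℝ)} (hK : IsProperCone K) :
    ∃ C : PointedCone ℝ (Fin m → ℝ), (C : Set (Fin m → ℝ)) = K ∧ IsClosed (C : Set (Fin m → ℝ)) ∧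
      (C : ConvexCone ℝ (Fin m → ℝ)).Salient ∧ (interior (C : Set (Fin m → ℝ))).Nonempty := by
  obtain ⟨hsmul, hadd, hclosed, hpointed, hsolid⟩ := hK
  let C : PointedCone ℝ (Fin m → ℝ) := .ofConeComb K (hsolid.mono interior_subset)
    fun x hx y hy a ha b hb ↦ hadd _ (hsmul a ha x hx) _ (hsmul b hb y hy)
  exact ⟨C, rfl, hclosed, C.salient_iff_inter_neg_eq_singleton.2 hpointed, hsolid⟩

-- `coneGen ∅` is empty, whereas every hull contains `0`.
lemma coneGen_eq_hull {m : ℕ} {X : Set (Fin m → ℝ)} (hX : X.Nonempty) :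
    coneGen X = PointedCone.hull ℝ X := by
  refine Subset.antisymm (sInter_subset_of_mem ⟨?_, ?_, PointedCone.subset_hull⟩) ?_
  · exact fun a ha x hx ↦ PointedCone.smul_mem _ ha hx
  · exact fun x hx y hy ↦ add_mem hx hy
  · rintro x hx K ⟨hsmul, hadd, hXK⟩
    let C : PointedCone ℝ (Fin m → ℝ) := .ofConeComb K (hX.mono hXK)
      fun x hx y hy a ha b hb ↦ hadd _ (hsmul a ha x hx) _ (hsmul b hb y hy)
    exact (Submodule.span_le (p := C)).2 hXK hx

/-- Theorem: for a real `2×2` matrix `A` with `det A < 0` and (necessarily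
real) eigenvalues `l₁ > 0 > l₂`, a proper cone `K` is `A`-invariant iff
`K = Cone{u₁ + c₁ u₂, u₁ + c₂ u₂}` for eigenvectors `u₁` (for `l₁`), `u₂`
(for `l₂`) and reals `c₁ > 0 > c₂` with `l₁/l₂ ≤ c₁/c₂ ≤ l₂/l₁`. -/
theorem invariant_iff_of_negative_determinant
    (A : Matrix (Fin 2) (Fin 2) ℝ) (l₁ l₂ : ℝ)
    (hdet : A.det < 0) (hl₁ : 0 < l₁) (hl₂ : l₂ < 0)
    (he₁ : ∃ u : Fin 2 → ℝ, u ≠ 0 ∧ A.mulVec u = l₁ • u)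
    (he₂ : ∃ u : Fin 2 → ℝ, u ≠ 0 ∧ A.mulVec u = l₂ • u)
    (K : Set (Fin 2 → ℝ)) (hK : IsProperCone K) :
    InvariantUnder A K ↔
      ∃ (u₁ u₂ : Fin 2 → ℝ) (c₁ c₂ : ℝ),
        (u₁ ≠ 0 ∧ A.mulVec u₁ = l₁ • u₁) ∧
        (u₂ ≠ 0 ∧ A.mulVec u₂ = l₂ • u₂) ∧
        0 < c₁ ∧ c₂ < 0 ∧
        l₁ / l₂ ≤ c₁ / c₂ ∧ c₁ / c₂ ≤ l₂ / l₁ ∧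
        K = coneGen {u₁ + c₁ • u₂, u₁ + c₂ • u₂} := by
  obtain ⟨C, rfl, hC, hsal, hsolid⟩ := hK.exists_pointedCone
  simp only [coneGen_eq_hull (insert_nonempty _ _), SetLike.coe_set_eq,
    ← hasEigenvector_mulVecLin_iff] at he₁ he₂ ⊢
  exact invariant_iff_of_negative_determinant_general (by simp) hl₁ hl₂ he₁ he₂ hC hsal hsolid
end

section
/- Let A₁,…,Aₙ be real 2×2 Vandergraft matrices sharing a common dominant eigenvector u. Then there exists a proper cone K ⊆ ℝ² invariant under every A_j if and only if either (i) every A_j is diagonalizable, and any two matrices A_i, A_j with det A_i < 0, trace A_i = 0, det A_j < 0, trace A_j = 0 are scalar multiples of each other, or (ii) every A_j has det A_j ≥ 0, and any two non-diagonalizable matrices among A₁,…,Aₙ have the same orientation with respect to u. -/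
/-- `A` is a Vandergraft matrix: `(trace A)² ≥ 4 det A` and `trace A ≥ 0`. -/
def IsVandergraft (A : Matrix (Fin 2) (Fin 2) ℝ) : Prop :=
  A.trace ^ 2 ≥ 4 * A.det ∧ 0 ≤ A.trace

/-- The spectral radius (largest eigenvalue) of a `2×2` Vandergraft matrix. -/
noncomputable def rho2 (A : Matrix (Fin 2) (Fin 2) ℝ) : ℝ :=
  (A.trace + Real.sqrt (A.trace ^ 2 - 4 * A.det)) / 2

/-- `A` is diagonalizable by a real similarity. -/
def IsDiagonalizable (A : Matrix (Fin 2) (Fin 2) ℝ) : Prop :=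
  ∃ P : Matrix (Fin 2) (Fin 2) ℝ, IsUnit P.det ∧ (P⁻¹ * A * P).IsDiag

/-- `v` is positively associated with the eigenvector `u` relative to `A`:
`A u = t u` and `A v = t v + x u` for some `x > 0`. -/
def PosAssoc (A : Matrix (Fin 2) (Fin 2) ℝ) (u v : Fin 2 → ℝ) : Prop :=
  ∃ t x : ℝ, 0 < x ∧ A.mulVec u = t • u ∧ A.mulVec v = t • v + x • u

/-!
Complete `u` to a basis `u, w`; every `A j` becomes upper triangular with `rho2 (A j)` in the upper
left corner.

Necessity. If both diagonal entries of such a triangular `A = r + N` equal `r > 0`, then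
`N ^ 2 = 0` and the powers of `A / r` are `1 + n N / r`; dividing by `n` and letting it grow, `N`
preserves every closed cone that `A` preserves (for `r = 0` it is `A` itself). All such nilpotent
parts are multiples of one another, and a pointed solid cone cannot be preserved by both `N ≠ 0` and
a negative multiple of `N`. Two non-diagonalizable matrices thus have the same orientation, and if
`A` is non-diagonalizable, then `N * B = s • N` forces the second eigenvalue `s` of `B` to be
nonnegative. When `A` and `B` have trace zero, `A * B` and `B * A` have opposite nilpotent parts,
which must then vanish, so `B` is a multiple of `A`.

Sufficiency. For large `M` the cone generated by `M u + w` and `M u - w` is preserved in case (i),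
and the one generated by `u` and `M u + w` in case (ii). Matrices whose two eigenvalues have the
same absolute value put no bound on `M` but restrict `w`: it is chosen beforehand as an eigenvector
of all of them in case (i), and positively associated with `u` relative to all the
non-diagonalizable ones in case (ii).
-/

open Module Filter Topology
open scoped Matrix

namespace InvariantUnder

variable {m : ℕ} {A B : Matrix (Fin m) (Fin m) ℝ} {K : Set (Fin m → ℝ)}

lemma mul (hA : InvariantUnder A K) (hB : InvariantUnder B K) : InvariantUnder (A * B) K :=
  fun x hx ↦ Matrix.mulVec_mulVec x A B ▸ hA _ (hB x hx)

end InvariantUnder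

namespace IsProperCone

variable {m : ℕ} {K : Set (Fin m → ℝ)}

lemma smul_mem (hK : IsProperCone K) {a : ℝ} (ha : 0 ≤ a) {x : Fin m → ℝ} (hx : x ∈ K) :
    a • x ∈ K :=
  hK.1 a ha x hx

lemma add_mem (hK : IsProperCone K) {x y : Fin m → ℝ} (hx : x ∈ K) (hy : y ∈ K) : x + y ∈ K :=
  hK.2.1 x hx y hy

lemma isClosed (hK : IsProperCone K) : IsClosed K := hK.2.2.1

lemma eq_zero_of_neg_mem (hK : IsProperCone K) {x : Fin m → ℝ} (hx : x ∈ K) (hnx : -x ∈ K) :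
    x = 0 := by
  have hx0 : x ∈ K ∩ -K := ⟨hx, hnx⟩
  rwa [hK.2.2.2.1] at hx0

lemma exists_mulVec_ne_zero (hK : IsProperCone K) {N : Matrix (Fin m) (Fin m) ℝ} (hN : N ≠ 0) :
    ∃ p ∈ K, N *ᵥ p ≠ 0 := by
  by_contra! hc
  have hker : (Matrix.toLin' N).ker = ⊤ :=
    Submodule.eq_top_of_nonempty_interior' _ (hK.2.2.2.2.mono (interior_mono hc))
  exact hN (Matrix.toLin'.map_eq_zero_iff.1 (LinearMap.ker_eq_top.1 hker))

lemma nonneg_of_invariantUnder_smul (hK : IsProperCone K) {N : Matrix (Fin m) (Fin m) ℝ}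
    (hN : N ≠ 0) {c : ℝ} (hinv : InvariantUnder N K) (hcinv : InvariantUnder (c • N) K) :
    0 ≤ c := by
  obtain ⟨p, hp, hNp⟩ := hK.exists_mulVec_ne_zero hN
  by_contra! hc
  have hneg : -(N *ᵥ p) ∈ K := by
    have h := hK.smul_mem (neg_nonneg.2 (inv_lt_zero.2 hc).le) (hcinv p hp)
    rwa [Matrix.smul_mulVec, smul_smul, neg_mul, inv_mul_cancel₀ hc.ne, neg_one_smul] at h
  exact hNp (hK.eq_zero_of_neg_mem (hinv p hp) hneg)

lemma mem_of_forall_add_nsmul_mem (hK : IsProperCone K) {p q : Fin m → ℝ}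
    (h : ∀ n : ℕ, p + n • q ∈ K) : q ∈ K := by
  have hlim : Tendsto (fun n : ℕ ↦ (n : ℝ)⁻¹ • p + q) atTop (𝓝 q) := by
    simpa using (tendsto_inv_atTop_nhds_zero_nat (𝕜 := ℝ)).smul_const p |>.add_const q
  refine hK.isClosed.mem_of_tendsto hlim ((eventually_ne_atTop 0).mono fun n hn ↦ ?_)
  have hn' : (n : ℝ) ≠ 0 := Nat.cast_ne_zero.2 hn
  have hmem := hK.smul_mem (inv_nonneg.2 n.cast_nonneg) (h n)
  rwa [smul_add, ← Nat.cast_smul_eq_nsmul ℝ, inv_smul_smul₀ hn'] at hmem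

lemma invariantUnder_sub_smul_one (hK : IsProperCone K) {A : Matrix (Fin m) (Fin m) ℝ} {r : ℝ}
    (hr : 0 ≤ r) (hsq : (A - r • 1) * (A - r • 1) = 0) (hA : InvariantUnder A K) :
    InvariantUnder (A - r • 1) K := by
  rcases hr.eq_or_lt with rfl | hr
  · simpa using hA
  intro p hp
  set N := A - r • (1 : Matrix (Fin m) (Fin m) ℝ) with hN
  have hshear (x : Fin m → ℝ) : r⁻¹ • A *ᵥ x = x + r⁻¹ • N *ᵥ x := by
    rw [hN, Matrix.sub_mulVec, Matrix.smul_mulVec, Matrix.one_mulVec, smul_sub,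
      inv_smul_smul₀ hr.ne', add_sub_cancel]
  have hiter (n : ℕ) : p + n • r⁻¹ • N *ᵥ p ∈ K := by
    induction n with
    | zero => simpa using hp
    | succ n ih =>
      have hnext := hK.smul_mem (inv_nonneg.2 hr.le) (hA _ ih)
      rwa [hshear, Matrix.mulVec_add, Matrix.mulVec_smul, Matrix.mulVec_smul,
        Matrix.mulVec_mulVec, hsq, Matrix.zero_mulVec, smul_zero, smul_zero, add_zero, add_assoc,
        ← succ_nsmul] at hnext
  have hlim := hK.smul_mem hr.le (hK.mem_of_forall_add_nsmul_mem hiter)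
  rwa [smul_inv_smul₀ hr.ne'] at hlim

end IsProperCone

/-- The simplicial cone generated by a basis: the vectors with nonnegative coordinates. -/
def basisCone {m : ℕ} (B : Basis (Fin m) ℝ (Fin m → ℝ)) : Set (Fin m → ℝ) :=
  {v | ∀ i, 0 ≤ B.repr v i}

section BasisCone

variable {m : ℕ} (B : Basis (Fin m) ℝ (Fin m → ℝ))

lemma basis_mem_basisCone (i : Fin m) : B i ∈ basisCone B := by
  intro j
  rw [B.repr_self_apply]
  split_ifs <;> norm_num

lemma isProperCone_basisCone : IsProperCone (basisCone B) := by
  have hcont (i : Fin m) : Continuous fun v ↦ B.repr v i :=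
    (continuous_apply i).comp B.continuous_coe_repr
  refine ⟨fun a ha x hx i ↦ ?_, fun x hx y hy i ↦ ?_, ?_, ?_, ∑ i, B i, ?_⟩
  · simpa using mul_nonneg ha (hx i)
  · simpa using add_nonneg (hx i) (hy i)
  · simp only [basisCone, Set.ofPred_forall]
    exact isClosed_iInter fun i ↦ isClosed_le continuous_const (hcont i)
  · refine Set.Subset.antisymm (fun v ⟨hv, hnv⟩ ↦ B.ext_elem fun i ↦ ?_) ?_
    · have hi : 0 ≤ -B.repr v i := by simpa using hnv i
      simpa using le_antisymm (neg_nonneg.1 hi) (hv i)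
    · simp [basisCone]
  · have hopen : IsOpen (⋂ i, {v | 0 < B.repr v i}) :=
      isOpen_iInter_of_finite fun i ↦ isOpen_lt continuous_const (hcont i)
    refine interior_maximal (fun v hv i ↦ (Set.mem_iInter.1 hv i).le) hopen ?_
    simp [Finsupp.single_apply]

lemma invariantUnder_basisCone {A : Matrix (Fin m) (Fin m) ℝ}
    (hA : ∀ i, A *ᵥ B i ∈ basisCone B) : InvariantUnder A (basisCone B) := by
  intro x hx i
  rw [← B.sum_repr x, Matrix.mulVec_sum]
  simpa [Matrix.mulVec_smul] using
    Finset.sum_nonneg fun j _ ↦ mul_nonneg (hx j) (hA j i)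

end BasisCone

lemma exists_basis_coe_eq {m : ℕ} {𝕜 : Type*} [Field 𝕜] {v : Fin m → Fin m → 𝕜}
    (hv : LinearIndependent 𝕜 v) : ∃ B : Basis (Fin m) 𝕜 (Fin m → 𝕜), ⇑B = v :=
  ⟨basisOfTopLeSpanOfCardEqFinrank v
    (hv.span_eq_top_of_card_eq_finrank' (by simp)).ge (by simp), by simp⟩

lemma exists_properCone_of_mulVec_eq {ι : Type*} {A : ι → Matrix (Fin 2) (Fin 2) ℝ}
    {p q : Fin 2 → ℝ} (hpq : LinearIndependent ℝ ![p, q])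
    (hp : ∀ j, ∃ a b : ℝ, 0 ≤ a ∧ 0 ≤ b ∧ A j *ᵥ p = a • p + b • q)
    (hq : ∀ j, ∃ a b : ℝ, 0 ≤ a ∧ 0 ≤ b ∧ A j *ᵥ q = a • p + b • q) :
    ∃ K : Set (Fin 2 → ℝ), IsProperCone K ∧ ∀ j, InvariantUnder (A j) K := by
  obtain ⟨B, hB⟩ := exists_basis_coe_eq hpq
  have hK := isProperCone_basisCone B
  have hmem {a b : ℝ} (ha : 0 ≤ a) (hb : 0 ≤ b) : a • p + b • q ∈ basisCone B := by
    have hp' := basis_mem_basisCone B 0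
    have hq' := basis_mem_basisCone B 1
    rw [hB] at hp' hq'
    exact hK.add_mem (hK.smul_mem ha hp') (hK.smul_mem hb hq')
  refine ⟨basisCone B, hK, fun j ↦ invariantUnder_basisCone B fun i ↦ ?_⟩
  rw [hB]
  obtain ⟨a, b, ha, hb, hp⟩ := hp j
  obtain ⟨c, d, hc, hd, hq⟩ := hq j
  fin_cases i
  · exact hp ▸ hmem ha hb
  · exact hq ▸ hmem hc hd

lemma exists_linearIndependent_pair {𝕜 : Type*} [Field 𝕜] {u : Fin 2 → 𝕜} (hu : u ≠ 0) :
    ∃ w, LinearIndependent 𝕜 ![u, w] :=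
  exists_linearIndependent_pair_of_one_lt_finrank (by simp) hu

/-- In the ordered pair `u, w` the matrix `A` acts as the upper triangular matrix with diagonal
`r, s` and corner entry `b`. The pair need not be a basis, so `A` does not determine `r, b, s`. -/
structure TriangularOn {R : Type*} [CommRing R] (u w : Fin 2 → R) (A : Matrix (Fin 2) (Fin 2) R)
    (r b s : R) : Prop where
  mulVec_left : A *ᵥ u = r • u
  mulVec_right : A *ᵥ w = b • u + s • w

namespace TriangularOn

section CommRing

variable {R : Type*} [CommRing R] {u w : Fin 2 → R} {A A' : Matrix (Fin 2) (Fin 2) R}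
  {r b s r' b' s' : R}

lemma mul (h : TriangularOn u w A r b s) (h' : TriangularOn u w A' r' b' s') :
    TriangularOn u w (A * A') (r * r') (r * b' + b * s') (s * s') where
  mulVec_left := by
    rw [← Matrix.mulVec_mulVec, h'.mulVec_left, Matrix.mulVec_smul, h.mulVec_left]
    module
  mulVec_right := by
    rw [← Matrix.mulVec_mulVec, h'.mulVec_right, Matrix.mulVec_add, Matrix.mulVec_smul,
      Matrix.mulVec_smul, h.mulVec_left, h.mulVec_right]
    module

lemma smul (h : TriangularOn u w A r b s) (c : R) :
    TriangularOn u w (c • A) (c * r) (c * b) (c * s) where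
  mulVec_left := by rw [Matrix.smul_mulVec, h.mulVec_left, smul_smul]
  mulVec_right := by rw [Matrix.smul_mulVec, h.mulVec_right]; module

lemma sub_smul_one (h : TriangularOn u w A r b s) (c : R) :
    TriangularOn u w (A - c • 1) (r - c) b (s - c) where
  mulVec_left := by
    rw [Matrix.sub_mulVec, h.mulVec_left, Matrix.smul_mulVec, Matrix.one_mulVec]; module
  mulVec_right := by
    rw [Matrix.sub_mulVec, h.mulVec_right, Matrix.smul_mulVec, Matrix.one_mulVec]; module

end CommRing

section Field

variable {𝕜 : Type*} [Field 𝕜] {u w : Fin 2 → 𝕜} {A A' : Matrix (Fin 2) (Fin 2) 𝕜}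
  {r b s r' b' s' : 𝕜}

lemma ext (huw : LinearIndependent 𝕜 ![u, w]) (h : TriangularOn u w A r b s)
    (h' : TriangularOn u w A' r' b' s') (hr : r = r') (hb : b = b') (hs : s = s') : A = A' := by
  obtain ⟨B, hB⟩ := exists_basis_coe_eq huw
  subst hr hb hs
  refine Matrix.toLin'.injective (B.ext fun i ↦ ?_)
  rw [hB]
  fin_cases i
  · simp [h.mulVec_left, h'.mulVec_left]
  · simp [h.mulVec_right, h'.mulVec_right]

lemma trace_eq (huw : LinearIndependent 𝕜 ![u, w]) (h : TriangularOn u w A r b s) :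
    A.trace = r + s := by
  obtain ⟨B, hB⟩ := exists_basis_coe_eq huw
  have h0 : A *ᵥ B 0 = r • B 0 := by simpa [hB] using h.mulVec_left
  have h1 : A *ᵥ B 1 = b • B 0 + s • B 1 := by simpa [hB] using h.mulVec_right
  rw [← Matrix.trace_toLin'_eq, LinearMap.trace_eq_matrix_trace 𝕜 B, Matrix.trace_fin_two]
  simp [LinearMap.toMatrix_apply, h0, h1]

lemma ne_zero (huw : LinearIndependent 𝕜 ![u, w]) (h : TriangularOn u w A r b s) (hb : b ≠ 0) :
    A ≠ 0 := by
  rintro rfl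
  have hcomb : b • u + s • w = 0 := by rw [← h.mulVec_right, Matrix.zero_mulVec]
  exact hb (huw.eq_zero_of_pair hcomb).1

lemma eq_zero_of_mulVec_eq (huw : LinearIndependent 𝕜 ![u, w]) (h : TriangularOn u w A r b s)
    {c : 𝕜} (hw : A *ᵥ w = c • w) : b = 0 := by
  have hcomb : b • u + (s - c) • w = 0 := by
    rw [sub_smul, ← hw, h.mulVec_right]
    abel
  exact (huw.eq_zero_of_pair hcomb).1

lemma sub_smul_one_mul_self (huw : LinearIndependent 𝕜 ![u, w]) (h : TriangularOn u w A r b r) :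
    (A - r • 1) * (A - r • 1) = 0 := by
  have hN := h.sub_smul_one r
  rw [ext huw (hN.mul hN) (hN.smul 0) (by ring) (by ring) (by ring), zero_smul]

lemma exists_eigenvector (huw : LinearIndependent 𝕜 ![u, w]) (h : TriangularOn u w A r b s)
    (hrs : r ≠ s) : ∃ v, LinearIndependent 𝕜 ![u, v] ∧ A *ᵥ v = s • v := by
  refine ⟨(b / (s - r)) • u + w, (LinearIndependent.pair_add_smul_right_iff _).2 huw, ?_⟩
  rw [Matrix.mulVec_add, Matrix.mulVec_smul, h.mulVec_left, h.mulVec_right]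
  have hb : b / (s - r) * r + b = s * (b / (s - r)) := by
    have := sub_ne_zero.2 hrs.symm
    field_simp
    ring
  linear_combination (norm := module) hb • u

end Field

end TriangularOn

lemma exists_triangularOn {𝕜 : Type*} [Field 𝕜] {u w : Fin 2 → 𝕜} {A : Matrix (Fin 2) (Fin 2) 𝕜}
    {r : 𝕜} (huw : LinearIndependent 𝕜 ![u, w]) (hu : A *ᵥ u = r • u) :
    ∃ b, TriangularOn u w A r b (A.trace - r) := by
  obtain ⟨B, hB⟩ := exists_basis_coe_eq huw
  have h : TriangularOn u w A r (B.repr (A *ᵥ w) 0) (B.repr (A *ᵥ w) 1) :=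
    ⟨hu, by simpa [hB] using (B.sum_repr (A *ᵥ w)).symm⟩
  exact ⟨_, by rwa [h.trace_eq huw, add_sub_cancel_left]⟩

lemma isDiagonalizable_of_mulVec_eq {A : Matrix (Fin 2) (Fin 2) ℝ} {u v : Fin 2 → ℝ} {r s : ℝ}
    (huv : LinearIndependent ℝ ![u, v]) (hu : A *ᵥ u = r • u) (hv : A *ᵥ v = s • v) :
    IsDiagonalizable A := by
  set P : Matrix (Fin 2) (Fin 2) ℝ := (Matrix.of ![u, v])ᵀ
  have hP : IsUnit P.det :=
    (Matrix.isUnit_iff_isUnit_det P).1 (Matrix.linearIndependent_cols_iff_isUnit.1 huv)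
  have hAP : A * P = P * Matrix.diagonal ![r, s] := by
    ext i j
    rw [Matrix.mul_diagonal]
    fin_cases j
    · exact (congrFun hu i).trans (mul_comm r (u i))
    · exact (congrFun hv i).trans (mul_comm s (v i))
  refine ⟨P, hP, ?_⟩
  rw [Matrix.mul_assoc, hAP, Matrix.nonsing_inv_mul_cancel_left _ _ hP]
  exact Matrix.isDiag_diagonal _

namespace IsDiagonalizable

variable {A : Matrix (Fin 2) (Fin 2) ℝ} {r : ℝ}

lemma eq_smul_one (h : IsDiagonalizable A) (htr : A.trace = 2 * r) (hdet : A.det = r ^ 2) :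
    A = r • 1 := by
  obtain ⟨P, hP, hD⟩ := h
  have hPu : IsUnit P := (Matrix.isUnit_iff_isUnit_det P).2 hP
  rw [← Matrix.trace_conj' hPu, ← hD.diagonal_diag, Matrix.trace_diagonal, Fin.sum_univ_two] at htr
  rw [← Matrix.det_conj' hPu, ← hD.diagonal_diag, Matrix.det_diagonal, Fin.prod_univ_two] at hdet
  set d := (P⁻¹ * A * P).diag
  have h0 : d 0 = r := by
    have hsq : (d 0 - r) ^ 2 = 0 := by linear_combination d 0 * htr - hdet
    exact sub_eq_zero.1 (pow_eq_zero_iff two_ne_zero |>.1 hsq)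
  have h1 : d 1 = r := by linarith
  have hconj : P⁻¹ * A * P = r • 1 := by
    rw [← hD.diagonal_diag, Matrix.smul_one_eq_diagonal]
    congr 1
    ext i
    fin_cases i
    exacts [h0, h1]
  calc A = P * (P⁻¹ * A * P) * P⁻¹ := by
        rw [Matrix.mul_assoc, Matrix.mul_nonsing_inv_cancel_right _ _ hP,
          Matrix.mul_nonsing_inv_cancel_left _ _ hP]
    _ = r • 1 := by simp [hconj, Matrix.mul_nonsing_inv P hP]

end IsDiagonalizable

lemma posAssoc_iff_sub_smul_one {A : Matrix (Fin 2) (Fin 2) ℝ} {u v : Fin 2 → ℝ} {r : ℝ}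
    (hu : u ≠ 0) (hAu : A *ᵥ u = r • u) :
    PosAssoc A u v ↔ ∃ x : ℝ, 0 < x ∧ (A - r • 1) *ᵥ v = x • u := by
  have hsub (x : ℝ) : (A - r • 1) *ᵥ v = x • u ↔ A *ᵥ v = r • v + x • u := by
    rw [Matrix.sub_mulVec, Matrix.smul_mulVec, Matrix.one_mulVec, sub_eq_iff_eq_add']
  simp only [hsub]
  constructor
  · rintro ⟨t, x, hx, htu, htv⟩
    obtain rfl : t = r := smul_left_injective ℝ hu (htu.symm.trans hAu)
    exact ⟨x, hx, htv⟩
  · rintro ⟨x, hx, hv⟩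
    exact ⟨r, x, hx, hAu, hv⟩

lemma posAssoc_iff_of_sub_smul_one_eq {A A' : Matrix (Fin 2) (Fin 2) ℝ} {u v : Fin 2 → ℝ}
    {r r' c : ℝ} (hu : u ≠ 0) (hAu : A *ᵥ u = r • u) (hAu' : A' *ᵥ u = r' • u) (hc : 0 < c)
    (hA' : A' - r' • 1 = c • (A - r • 1)) : PosAssoc A u v ↔ PosAssoc A' u v := by
  rw [posAssoc_iff_sub_smul_one hu hAu, posAssoc_iff_sub_smul_one hu hAu', hA']
  constructor
  · rintro ⟨x, hx, hv⟩
    exact ⟨c * x, mul_pos hc hx, by rw [Matrix.smul_mulVec, hv, smul_smul]⟩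
  · rintro ⟨x, hx, hv⟩
    refine ⟨c⁻¹ * x, mul_pos (inv_pos.2 hc) hx, ?_⟩
    rw [← smul_smul, ← hv, Matrix.smul_mulVec, inv_smul_smul₀ hc.ne']

namespace TriangularOn

variable {u w : Fin 2 → ℝ} {A A' : Matrix (Fin 2) (Fin 2) ℝ} {r b s r' b' s' : ℝ}

lemma posAssoc_iff (h : TriangularOn u w A r b r) (hu : u ≠ 0) : PosAssoc A u w ↔ 0 < b := by
  rw [posAssoc_iff_sub_smul_one hu h.mulVec_left, (h.sub_smul_one r).mulVec_right]
  simp only [sub_self, zero_smul, add_zero, (smul_left_injective ℝ hu).eq_iff]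
  simp

variable {K : Set (Fin 2 → ℝ)}

lemma invariantUnder_sub_smul_one (huw : LinearIndependent ℝ ![u, w])
    (h : TriangularOn u w A r b r) (hr : 0 ≤ r) (hK : IsProperCone K) (hA : InvariantUnder A K) :
    InvariantUnder (A - r • 1) K :=
  hK.invariantUnder_sub_smul_one hr (h.sub_smul_one_mul_self huw) hA

lemma nonneg_of_invariantUnder (huw : LinearIndependent ℝ ![u, w])
    (h : TriangularOn u w A r b r) (hb : b ≠ 0) (hr : 0 ≤ r) (h' : TriangularOn u w A' r' b' s')
    (hK : IsProperCone K) (hA : InvariantUnder A K) (hA' : InvariantUnder A' K) : 0 ≤ s' := by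
  have hN := h.sub_smul_one r
  have hinv := h.invariantUnder_sub_smul_one huw hr hK hA
  have hmul : (A - r • 1) * A' = s' • (A - r • 1) :=
    ext huw (hN.mul h') (hN.smul s') (by ring) (by ring) (by ring)
  exact hK.nonneg_of_invariantUnder_smul (hN.ne_zero huw hb) hinv (hmul ▸ hinv.mul hA')

lemma posAssoc_iff_of_invariantUnder (huw : LinearIndependent ℝ ![u, w])
    (h : TriangularOn u w A r b r) (hb : b ≠ 0) (hr : 0 ≤ r)
    (h' : TriangularOn u w A' r' b' r') (hb' : b' ≠ 0) (hr' : 0 ≤ r')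
    (hK : IsProperCone K) (hA : InvariantUnder A K) (hA' : InvariantUnder A' K) (v : Fin 2 → ℝ) :
    PosAssoc A u v ↔ PosAssoc A' u v := by
  have hN := h.sub_smul_one r
  have hinv := h.invariantUnder_sub_smul_one huw hr hK hA
  have hinv' := h'.invariantUnder_sub_smul_one huw hr' hK hA'
  have hsmul : A' - r' • 1 = (b' / b) • (A - r • 1) :=
    ext huw (h'.sub_smul_one r') (hN.smul (b' / b)) (by ring) (by field_simp) (by ring)
  have hc : 0 < b' / b :=
    (hK.nonneg_of_invariantUnder_smul (hN.ne_zero huw hb) hinv (hsmul ▸ hinv')).lt_of_ne'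
      (div_ne_zero hb' hb)
  exact posAssoc_iff_of_sub_smul_one_eq (huw.ne_zero 0) h.mulVec_left h'.mulVec_left hc hsmul

lemma mul_eq_mul_of_invariantUnder (huw : LinearIndependent ℝ ![u, w])
    (h : TriangularOn u w A r b (-r)) (h' : TriangularOn u w A' r' b' (-r')) (hr : 0 ≤ r)
    (hr' : 0 ≤ r') (hK : IsProperCone K) (hA : InvariantUnder A K) (hA' : InvariantUnder A' K) :
    r * b' = r' * b := by
  have hmul : TriangularOn u w (A * A') (r * r') (r * b' - r' * b) (r * r') := by
    convert h.mul h' using 1 <;> ring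
  have hmul' : TriangularOn u w (A' * A) (r * r') (-(r * b' - r' * b)) (r * r') := by
    convert h'.mul h using 1 <;> ring
  have hrr : 0 ≤ r * r' := mul_nonneg hr hr'
  have hN := hmul.sub_smul_one (r * r')
  have hneg : A' * A - (r * r') • 1 = (-1 : ℝ) • (A * A' - (r * r') • 1) :=
    ext huw (hmul'.sub_smul_one (r * r')) (hN.smul (-1)) (by ring) (by ring) (by ring)
  by_contra hne
  have hnonneg : (0 : ℝ) ≤ -1 := hK.nonneg_of_invariantUnder_smul
    (hN.ne_zero huw (sub_ne_zero.2 hne))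
    (hmul.invariantUnder_sub_smul_one huw hrr hK (hA.mul hA'))
    (hneg ▸ hmul'.invariantUnder_sub_smul_one huw hrr hK (hA'.mul hA))
  norm_num at hnonneg

lemma exists_eq_smul_of_invariantUnder (huw : LinearIndependent ℝ ![u, w])
    (h : TriangularOn u w A r b (-r)) (h' : TriangularOn u w A' r' b' (-r')) (hr : 0 < r)
    (hr' : 0 ≤ r') (hK : IsProperCone K) (hA : InvariantUnder A K) (hA' : InvariantUnder A' K) :
    ∃ c : ℝ, A' = c • A := by
  have hb := mul_eq_mul_of_invariantUnder huw h h' hr.le hr' hK hA hA'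
  refine ⟨r' / r, ext huw h' (h.smul (r' / r)) ?_ ?_ ?_⟩ <;> field_simp
  linarith

end TriangularOn

/-- The eigenvalue of a `2 × 2` Vandergraft matrix other than the spectral radius `rho2 A`; the two
coincide when the characteristic polynomial has a double root. -/
noncomputable def subdominantEigenvalue (A : Matrix (Fin 2) (Fin 2) ℝ) : ℝ := A.trace - rho2 A

namespace IsVandergraft

variable {A : Matrix (Fin 2) (Fin 2) ℝ}

lemma abs_subdominantEigenvalue_le (hA : IsVandergraft A) : |subdominantEigenvalue A| ≤ rho2 A := by
  have hsqrt := Real.sqrt_nonneg (A.trace ^ 2 - 4 * A.det)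
  have htr := hA.2
  unfold subdominantEigenvalue rho2
  exact abs_le.2 ⟨by linarith, by linarith⟩

lemma rho2_nonneg (hA : IsVandergraft A) : 0 ≤ rho2 A :=
  (abs_nonneg _).trans hA.abs_subdominantEigenvalue_le

lemma rho2_mul_subdominantEigenvalue (hA : IsVandergraft A) :
    rho2 A * subdominantEigenvalue A = A.det := by
  have hsq := Real.sq_sqrt (sub_nonneg.2 hA.1)
  unfold subdominantEigenvalue rho2
  linear_combination -hsq / 4

lemma rho2_pos_of_det_neg (hA : IsVandergraft A) (hdet : A.det < 0) : 0 < rho2 A := by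
  refine hA.rho2_nonneg.lt_of_ne fun h ↦ hdet.ne ?_
  rw [← hA.rho2_mul_subdominantEigenvalue, ← h, zero_mul]

lemma subdominantEigenvalue_nonneg (hA : IsVandergraft A) (hdet : 0 ≤ A.det) :
    0 ≤ subdominantEigenvalue A := by
  by_contra! hneg
  have habs := hA.abs_subdominantEigenvalue_le
  rw [abs_of_neg hneg] at habs
  rw [← hA.rho2_mul_subdominantEigenvalue] at hdet
  nlinarith

lemma det_neg_and_trace_eq_zero (hA : IsVandergraft A)
    (heq : rho2 A = |subdominantEigenvalue A|) (hneg : subdominantEigenvalue A < 0) :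
    A.det < 0 ∧ A.trace = 0 := by
  rw [abs_of_neg hneg] at heq
  constructor
  · rw [← hA.rho2_mul_subdominantEigenvalue, heq]
    nlinarith
  · unfold subdominantEigenvalue at heq
    linarith

lemma eq_rho2_smul_one (hA : IsVandergraft A) (hdiag : IsDiagonalizable A)
    (heq : subdominantEigenvalue A = rho2 A) : A = rho2 A • 1 := by
  refine hdiag.eq_smul_one ?_ ?_
  · unfold subdominantEigenvalue at heq
    linarith
  · rw [← hA.rho2_mul_subdominantEigenvalue, heq, sq]

lemma mulVec_eq_rho2_smul (hA : IsVandergraft A) (hdiag : IsDiagonalizable A)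
    (heq : subdominantEigenvalue A = rho2 A) (v : Fin 2 → ℝ) : A *ᵥ v = rho2 A • v := by
  conv_lhs => rw [hA.eq_rho2_smul_one hdiag heq, Matrix.smul_mulVec, Matrix.one_mulVec]

end IsVandergraft

section DominantEigenvector

variable {A A' : Matrix (Fin 2) (Fin 2) ℝ} {u w : Fin 2 → ℝ}

lemma exists_triangularOn_rho2 (huw : LinearIndependent ℝ ![u, w]) (hAu : A *ᵥ u = rho2 A • u) :
    ∃ b, TriangularOn u w A (rho2 A) b (subdominantEigenvalue A) :=
  exists_triangularOn huw hAu

lemma exists_triangularOn_of_trace_eq_zero (huw : LinearIndependent ℝ ![u, w])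
    (hAu : A *ᵥ u = rho2 A • u) (htr : A.trace = 0) :
    ∃ b, TriangularOn u w A (rho2 A) b (-rho2 A) := by
  simpa [htr] using exists_triangularOn huw hAu

lemma exists_triangularOn_of_not_isDiagonalizable (huw : LinearIndependent ℝ ![u, w])
    (hAu : A *ᵥ u = rho2 A • u) (hA : ¬ IsDiagonalizable A) :
    subdominantEigenvalue A = rho2 A ∧ ∃ b ≠ 0, TriangularOn u w A (rho2 A) b (rho2 A) := by
  obtain ⟨b, h⟩ := exists_triangularOn_rho2 huw hAu
  have heq : subdominantEigenvalue A = rho2 A := by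
    by_contra hne
    obtain ⟨v, huv, hv⟩ := h.exists_eigenvector huw (Ne.symm hne)
    exact hA (isDiagonalizable_of_mulVec_eq huv hAu hv)
  rw [heq] at h
  refine ⟨heq, b, ?_, h⟩
  rintro rfl
  exact hA (isDiagonalizable_of_mulVec_eq huw hAu (by simpa using h.mulVec_right))

variable {K : Set (Fin 2 → ℝ)}

lemma exists_eq_smul_of_invariantUnder (hu : u ≠ 0) (hA : IsVandergraft A)
    (hAu : A *ᵥ u = rho2 A • u) (hA' : IsVandergraft A') (hAu' : A' *ᵥ u = rho2 A' • u)
    (hK : IsProperCone K) (hAK : InvariantUnder A K) (hAK' : InvariantUnder A' K)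
    (hdet : A.det < 0) (htr : A.trace = 0) (htr' : A'.trace = 0) : ∃ c : ℝ, A' = c • A := by
  obtain ⟨w, huw⟩ := exists_linearIndependent_pair hu
  obtain ⟨b, h⟩ := exists_triangularOn_of_trace_eq_zero huw hAu htr
  obtain ⟨b', h'⟩ := exists_triangularOn_of_trace_eq_zero huw hAu' htr'
  exact h.exists_eq_smul_of_invariantUnder huw h' (hA.rho2_pos_of_det_neg hdet) hA'.rho2_nonneg
    hK hAK hAK'

lemma det_nonneg_of_not_isDiagonalizable (hu : u ≠ 0) (hA : IsVandergraft A)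
    (hAu : A *ᵥ u = rho2 A • u) (hA' : IsVandergraft A') (hAu' : A' *ᵥ u = rho2 A' • u)
    (hK : IsProperCone K) (hAK : InvariantUnder A K) (hAK' : InvariantUnder A' K)
    (hnd : ¬ IsDiagonalizable A) : 0 ≤ A'.det := by
  obtain ⟨w, huw⟩ := exists_linearIndependent_pair hu
  obtain ⟨-, b, hb, h⟩ := exists_triangularOn_of_not_isDiagonalizable huw hAu hnd
  obtain ⟨b', h'⟩ := exists_triangularOn_rho2 huw hAu'
  rw [← hA'.rho2_mul_subdominantEigenvalue]
  exact mul_nonneg hA'.rho2_nonneg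
    (h.nonneg_of_invariantUnder huw hb hA.rho2_nonneg h' hK hAK hAK')

lemma posAssoc_iff_of_not_isDiagonalizable (hu : u ≠ 0) (hA : IsVandergraft A)
    (hAu : A *ᵥ u = rho2 A • u) (hA' : IsVandergraft A') (hAu' : A' *ᵥ u = rho2 A' • u)
    (hK : IsProperCone K) (hAK : InvariantUnder A K) (hAK' : InvariantUnder A' K)
    (hnd : ¬ IsDiagonalizable A) (hnd' : ¬ IsDiagonalizable A') (v : Fin 2 → ℝ) :
    PosAssoc A u v ↔ PosAssoc A' u v := by
  obtain ⟨w, huw⟩ := exists_linearIndependent_pair hu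
  obtain ⟨-, b, hb, h⟩ := exists_triangularOn_of_not_isDiagonalizable huw hAu hnd
  obtain ⟨-, b', hb', h'⟩ := exists_triangularOn_of_not_isDiagonalizable huw hAu' hnd'
  exact h.posAssoc_iff_of_invariantUnder huw hb hA.rho2_nonneg h' hb' hA'.rho2_nonneg hK hAK hAK' v

end DominantEigenvector

section Sufficiency

variable {ι : Type*} {A : ι → Matrix (Fin 2) (Fin 2) ℝ} {u w : Fin 2 → ℝ} {r b s : ι → ℝ}

lemma exists_properCone_of_abs_le (huw : LinearIndependent ℝ ![u, w])
    (h : ∀ j, TriangularOn u w (A j) (r j) (b j) (s j)) {M : ℝ} (hM : 0 < M)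
    (hb : ∀ j, |b j| ≤ M * (r j - |s j|)) :
    ∃ K : Set (Fin 2 → ℝ), IsProperCone K ∧ ∀ j, InvariantUnder (A j) K := by
  have hpq : LinearIndependent ℝ ![M • u + (1 : ℝ) • w, M • u + (-1 : ℝ) • w] :=
    (LinearIndependent.pair_add_smul_add_smul_iff _ _ _ _).2 ⟨huw, by linarith⟩
  have hcoef {β σ ρ : ℝ} (hβ : |β| ≤ M * (ρ - |σ|)) : 0 ≤ (ρ + β / M + σ) / 2 := by
    have hdiv : |β / M| ≤ ρ - |σ| := by
      rwa [abs_div, abs_of_pos hM, div_le_iff₀' hM]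
    linarith [neg_abs_le (β / M), neg_abs_le σ]
  refine exists_properCone_of_mulVec_eq hpq
    (fun j ↦ ⟨(r j + b j / M + s j) / 2, (r j + b j / M + -s j) / 2, hcoef (hb j),
      hcoef (by simpa using hb j), ?_⟩)
    (fun j ↦ ⟨(r j + -b j / M + -s j) / 2, (r j + -b j / M + s j) / 2,
      hcoef (by simpa using hb j), hcoef (by simpa using hb j), ?_⟩) <;>
  · simp only [Matrix.mulVec_add, Matrix.mulVec_smul, (h j).mulVec_left, (h j).mulVec_right]
    match_scalars <;> field_simp <;> ring

lemma exists_properCone_of_le (huw : LinearIndependent ℝ ![u, w])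
    (h : ∀ j, TriangularOn u w (A j) (r j) (b j) (s j)) (hr : ∀ j, 0 ≤ r j) (hs : ∀ j, 0 ≤ s j)
    {M : ℝ} (hb : ∀ j, -b j ≤ M * (r j - s j)) :
    ∃ K : Set (Fin 2 → ℝ), IsProperCone K ∧ ∀ j, InvariantUnder (A j) K := by
  refine exists_properCone_of_mulVec_eq ((LinearIndependent.pair_add_smul_right_iff M).2 huw)
    (fun j ↦ ⟨r j, 0, hr j, le_rfl, by rw [(h j).mulVec_left, zero_smul, add_zero]⟩)
    (fun j ↦ ⟨M * (r j - s j) + b j, s j, by linarith [hb j], hs j, ?_⟩)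
  rw [Matrix.mulVec_add, Matrix.mulVec_smul, (h j).mulVec_left, (h j).mulVec_right]
  module

lemma exists_pos_forall_le_mul [Finite ι] {f g : ι → ℝ} (hg : ∀ j, 0 ≤ g j)
    (hfg : ∀ j, g j = 0 → f j ≤ 0) : ∃ M : ℝ, 0 < M ∧ ∀ j, f j ≤ M * g j := by
  obtain ⟨M, hM⟩ := Finite.exists_le fun j ↦ f j / g j
  refine ⟨max M 1, by positivity, fun j ↦ ?_⟩
  rcases (hg j).eq_or_lt with hj | hj
  · simpa [← hj] using hfg j hj.symm
  · exact (div_le_iff₀ hj).1 ((hM j).trans (le_max_left M 1))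

lemma exists_common_eigenvector_of_trace_eq_zero (hu : u ≠ 0) (hV : ∀ j, IsVandergraft (A j))
    (hdom : ∀ j, A j *ᵥ u = rho2 (A j) • u)
    (hmul : ∀ i j, (A i).det < 0 → (A i).trace = 0 → (A j).det < 0 → (A j).trace = 0 →
      ∃ c : ℝ, A j = c • A i) :
    ∃ w, LinearIndependent ℝ ![u, w] ∧
      ∀ j, (A j).det < 0 → (A j).trace = 0 → ∃ c : ℝ, A j *ᵥ w = c • w := by
  obtain ⟨w, huw⟩ := exists_linearIndependent_pair hu
  by_cases hex : ∃ i, (A i).det < 0 ∧ (A i).trace = 0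
  · obtain ⟨i, hdet, htr⟩ := hex
    have hpos := (hV i).rho2_pos_of_det_neg hdet
    obtain ⟨b, h⟩ := exists_triangularOn_of_trace_eq_zero huw (hdom i) htr
    obtain ⟨v, huv, hv⟩ := h.exists_eigenvector huw (by linarith)
    refine ⟨v, huv, fun j hdetj htrj ↦ ?_⟩
    obtain ⟨c, hc⟩ := hmul i j hdet htr hdetj htrj
    exact ⟨c * -rho2 (A i), by rw [hc, Matrix.smul_mulVec, hv, smul_smul]⟩
  · exact ⟨w, huw, fun j hdet htr ↦ (hex ⟨j, hdet, htr⟩).elim⟩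

lemma exists_common_eigenvector_of_isDiagonalizable (hu : u ≠ 0) (hV : ∀ j, IsVandergraft (A j))
    (hdom : ∀ j, A j *ᵥ u = rho2 (A j) • u) (hdiag : ∀ j, IsDiagonalizable (A j))
    (hmul : ∀ i j, (A i).det < 0 → (A i).trace = 0 → (A j).det < 0 → (A j).trace = 0 →
      ∃ c : ℝ, A j = c • A i) :
    ∃ w, LinearIndependent ℝ ![u, w] ∧ ∀ j, rho2 (A j) = |subdominantEigenvalue (A j)| →
      ∃ c : ℝ, A j *ᵥ w = c • w := by
  obtain ⟨w, huw, hw⟩ := exists_common_eigenvector_of_trace_eq_zero hu hV hdom hmul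
  refine ⟨w, huw, fun j hj ↦ ?_⟩
  rcases le_or_gt 0 (subdominantEigenvalue (A j)) with hnonneg | hneg
  · rw [abs_of_nonneg hnonneg] at hj
    exact ⟨_, (hV j).mulVec_eq_rho2_smul (hdiag j) hj.symm w⟩
  · obtain ⟨hdet, htr⟩ := (hV j).det_neg_and_trace_eq_zero hj hneg
    exact hw j hdet htr

lemma exists_properCone_of_isDiagonalizable [Finite ι] (hu : u ≠ 0) (hV : ∀ j, IsVandergraft (A j))
    (hdom : ∀ j, A j *ᵥ u = rho2 (A j) • u) (hdiag : ∀ j, IsDiagonalizable (A j))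
    (hmul : ∀ i j, (A i).det < 0 → (A i).trace = 0 → (A j).det < 0 → (A j).trace = 0 →
      ∃ c : ℝ, A j = c • A i) :
    ∃ K : Set (Fin 2 → ℝ), IsProperCone K ∧ ∀ j, InvariantUnder (A j) K := by
  obtain ⟨w, huw, hw⟩ := exists_common_eigenvector_of_isDiagonalizable hu hV hdom hdiag hmul
  choose b h using fun j ↦ exists_triangularOn_rho2 huw (hdom j)
  obtain ⟨M, hM, hbM⟩ := exists_pos_forall_le_mul (f := fun j ↦ |b j|)
    (fun j ↦ sub_nonneg.2 (hV j).abs_subdominantEigenvalue_le) fun j hj ↦ by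
      obtain ⟨c, hc⟩ := hw j (sub_eq_zero.1 hj)
      simp only [(h j).eq_zero_of_mulVec_eq huw hc, abs_zero, le_rfl]
  exact exists_properCone_of_abs_le huw h hM hbM

lemma exists_common_posAssoc (hu : u ≠ 0)
    (hdom : ∀ j, A j *ᵥ u = rho2 (A j) • u)
    (hor : ∀ i j, ¬ IsDiagonalizable (A i) → ¬ IsDiagonalizable (A j) →
      ∀ v : Fin 2 → ℝ, PosAssoc (A i) u v ↔ PosAssoc (A j) u v) :
    ∃ w, LinearIndependent ℝ ![u, w] ∧ ∀ j, ¬ IsDiagonalizable (A j) → PosAssoc (A j) u w := by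
  obtain ⟨w, huw⟩ := exists_linearIndependent_pair hu
  by_cases hex : ∃ i, ¬ IsDiagonalizable (A i)
  · obtain ⟨i, hi⟩ := hex
    obtain ⟨-, b, hb, h⟩ := exists_triangularOn_of_not_isDiagonalizable huw (hdom i) hi
    refine ⟨b • w, ?_, fun j hj ↦ (hor i j hi hj _).1 ?_⟩
    · simpa using (LinearIndependent.pair_smul_smul_iff isUnit_one hb.isUnit).2 huw
    · refine ⟨rho2 (A i), b * b, mul_self_pos.2 hb, hdom i, ?_⟩
      rw [Matrix.mulVec_smul, h.mulVec_right]
      module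
  · exact ⟨w, huw, fun j hj ↦ (hex ⟨j, hj⟩).elim⟩

lemma exists_properCone_of_det_nonneg [Finite ι] (hu : u ≠ 0) (hV : ∀ j, IsVandergraft (A j))
    (hdom : ∀ j, A j *ᵥ u = rho2 (A j) • u) (hdet : ∀ j, 0 ≤ (A j).det)
    (hor : ∀ i j, ¬ IsDiagonalizable (A i) → ¬ IsDiagonalizable (A j) →
      ∀ v : Fin 2 → ℝ, PosAssoc (A i) u v ↔ PosAssoc (A j) u v) :
    ∃ K : Set (Fin 2 → ℝ), IsProperCone K ∧ ∀ j, InvariantUnder (A j) K := by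
  obtain ⟨w, huw, hw⟩ := exists_common_posAssoc hu hdom hor
  choose b h using fun j ↦ exists_triangularOn_rho2 huw (hdom j)
  obtain ⟨M, -, hbM⟩ := exists_pos_forall_le_mul (f := fun j ↦ -b j)
    (fun j ↦ sub_nonneg.2 ((le_abs_self _).trans (hV j).abs_subdominantEigenvalue_le))
    fun j hj ↦ by
      rw [neg_nonpos]
      have heq := (sub_eq_zero.1 hj).symm
      by_cases hdiag : IsDiagonalizable (A j)
      · have hAw := (hV j).mulVec_eq_rho2_smul hdiag heq w
        exact ((h j).eq_zero_of_mulVec_eq huw hAw).ge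
      · have hj := h j
        rw [heq] at hj
        exact ((hj.posAssoc_iff hu).1 (hw j hdiag)).le
  exact exists_properCone_of_le huw h (fun j ↦ (hV j).rho2_nonneg)
    (fun j ↦ (hV j).subdominantEigenvalue_nonneg (hdet j)) hbM

end Sufficiency

theorem common_invariant_cone_shared_dominant_eigenvector_general {ι : Type*} [Finite ι]
    (A : ι → Matrix (Fin 2) (Fin 2) ℝ) (hV : ∀ j, IsVandergraft (A j))
    (u : Fin 2 → ℝ) (hu : u ≠ 0) (hdom : ∀ j, (A j).mulVec u = rho2 (A j) • u) :
    (∃ K : Set (Fin 2 → ℝ), IsProperCone K ∧ ∀ j, InvariantUnder (A j) K) ↔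
      (((∀ j, IsDiagonalizable (A j)) ∧
          ∀ i j, (A i).det < 0 → (A i).trace = 0 → (A j).det < 0 → (A j).trace = 0 →
            ∃ c : ℝ, A j = c • A i) ∨
        ((∀ j, 0 ≤ (A j).det) ∧
          ∀ i j, ¬ IsDiagonalizable (A i) → ¬ IsDiagonalizable (A j) →
            ∀ v : Fin 2 → ℝ, PosAssoc (A i) u v ↔ PosAssoc (A j) u v)) := by
  constructor
  · rintro ⟨K, hK, hinv⟩
    by_cases hdiag : ∀ j, IsDiagonalizable (A j)
    · exact .inl ⟨hdiag, fun i j hdet htr _ htr' ↦ exists_eq_smul_of_invariantUnder hu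
        (hV i) (hdom i) (hV j) (hdom j) hK (hinv i) (hinv j) hdet htr htr'⟩
    · obtain ⟨k, hk⟩ := not_forall.1 hdiag
      exact .inr ⟨fun j ↦ det_nonneg_of_not_isDiagonalizable hu
          (hV k) (hdom k) (hV j) (hdom j) hK (hinv k) (hinv j) hk,
        fun i j ↦ posAssoc_iff_of_not_isDiagonalizable hu
          (hV i) (hdom i) (hV j) (hdom j) hK (hinv i) (hinv j)⟩
  · rintro (⟨hdiag, hmul⟩ | ⟨hdet, hor⟩)
    · exact exists_properCone_of_isDiagonalizable hu hV hdom hdiag hmul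
    · exact exists_properCone_of_det_nonneg hu hV hdom hdet hor

/-- Theorem: for `2×2` Vandergraft matrices `A 1, …, A n` sharing the
dominant eigenvector `u`, a common invariant proper cone exists iff either
(i) all `A j` are diagonalizable and any two of them with negative
determinant and zero trace are scalar multiples of each other, or (ii) all
`A j` have nonnegative determinants and any two non-diagonalizable ones
have the same orientation relative to `u`. -/
theorem common_invariant_cone_shared_dominant_eigenvector
    (n : ℕ) (A : Fin n → Matrix (Fin 2) (Fin 2) ℝ)
    (hV : ∀ j, IsVandergraft (A j))
    (u : Fin 2 → ℝ) (hu : u ≠ 0)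
    (hdom : ∀ j, (A j).mulVec u = rho2 (A j) • u) :
    (∃ K : Set (Fin 2 → ℝ), IsProperCone K ∧ ∀ j, InvariantUnder (A j) K) ↔
      (((∀ j, IsDiagonalizable (A j)) ∧
          ∀ i j, (A i).det < 0 → (A i).trace = 0 → (A j).det < 0 → (A j).trace = 0 →
            ∃ c : ℝ, A j = c • A i) ∨
        ((∀ j, 0 ≤ (A j).det) ∧
          ∀ i j, ¬ IsDiagonalizable (A i) → ¬ IsDiagonalizable (A j) →
            ∀ v : Fin 2 → ℝ, PosAssoc (A i) u v ↔ PosAssoc (A j) u v)) := by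
  exact common_invariant_cone_shared_dominant_eigenvector_general A hV u hu hdom
end

section
/- Let A₁,…,Aₙ be real 2×2 Vandergraft matrices sharing a common dominant eigenvector u. Then there exists a proper cone K ⊆ ℝ² invariant under every A_j if and only if for every pair of indices i, j there exists a proper cone invariant under both A_i and A_j. -/
/-!
A change of basis carries `u` to the first basis vector, and the matrices become upper triangular,
`!![r, b; 0, m]` with `|m| ≤ r`. Two mechanisms constrain a common invariant cone `K`:

* if `m = r`, iterating the matrix pushes every `v ∈ K` towards `b * v 1` times the first basis
  vector; as `K` is pointed, such blocks with `b ≠ 0` agree on the sign of `b`, and no other matrix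
  may reverse the sign of `v 1`, so every `m` is nonnegative;
* if `m = -r`, the product of two such matrices has equal diagonal entries and therefore, by the
  first mechanism, must be diagonal: the second eigenlines coincide.

Both are conditions on pairs. When they hold, either some block has `m = r`, `b ≠ 0` and a narrow
cone with `u` on its boundary is invariant, or a narrow cone around `u`, symmetric with respect to
the common second eigenline, is. In each case the invariance amounts to finitely many lower bounds
on the steepness `M` of the cone.
-/

open Filter Topology
open scoped Matrix

section ProperCone

variable {m : ℕ} {K : Set (Fin m → ℝ)}

lemma IsProperCone.smul_mem_s8 (hK : IsProperCone K) {a : ℝ} (ha : 0 ≤ a) {x : Fin m → ℝ}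
    (hx : x ∈ K) : a • x ∈ K :=
  hK.1 a ha x hx

lemma IsProperCone.isClosed_s8 (hK : IsProperCone K) : IsClosed K :=
  hK.2.2.1

lemma IsProperCone.eq_zero_of_neg_mem_s8 (hK : IsProperCone K) {x : Fin m → ℝ} (hx : x ∈ K)
    (hnx : -x ∈ K) : x = 0 :=
  Set.mem_singleton_iff.1 (hK.2.2.2.1 ▸ ⟨hx, hnx⟩)

lemma IsProperCone.zero_mem (hK : IsProperCone K) : (0 : Fin m → ℝ) ∈ K :=
  (hK.2.2.2.1.symm ▸ Set.mem_singleton _ : (0 : Fin m → ℝ) ∈ K ∩ -K).1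

lemma IsProperCone.nonempty_interior (hK : IsProperCone K) : (interior K).Nonempty :=
  hK.2.2.2.2

lemma isProperCone_Ici_zero : IsProperCone (Set.Ici (0 : Fin m → ℝ)) := by
  refine ⟨fun a ha x hx => ?_, fun x hx y hy => ?_, isClosed_Ici, ?_, 1, ?_⟩
  · exact Set.mem_Ici.2 (smul_nonneg ha hx)
  · exact Set.mem_Ici.2 (add_nonneg hx hy)
  · ext x
    simp only [Set.mem_inter_iff, Set.mem_Ici, Set.mem_neg, Left.nonneg_neg_iff,
      Set.mem_singleton_iff, le_antisymm_iff, and_comm]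
  · exact mem_interior_iff_mem_nhds.2 (pi_Ici_mem_nhds fun _ => zero_lt_one)

lemma IsProperCone.preimage_mulVec (hK : IsProperCone K) {P : Matrix (Fin m) (Fin m) ℝ}
    (hP : IsUnit P) : IsProperCone (P.mulVec ⁻¹' K) := by
  have hcont : Continuous P.mulVec := continuous_const.matrix_mulVec continuous_id
  refine ⟨fun a ha x hx => ?_, fun x hx y hy => ?_, hK.isClosed_s8.preimage hcont, ?_, ?_⟩
  · simpa only [Set.mem_preimage, Matrix.mulVec_smul] using hK.smul_mem_s8 ha hx
  · simpa only [Set.mem_preimage, Matrix.mulVec_add] using hK.2.1 _ hx _ hy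
  · refine Set.Subset.antisymm (fun x ⟨hx, hnx⟩ => ?_) ?_
    · rw [Set.mem_neg, Set.mem_preimage, Matrix.mulVec_neg] at hnx
      refine Matrix.mulVec_injective_of_isUnit hP ?_
      rw [hK.eq_zero_of_neg_mem_s8 hx hnx, Matrix.mulVec_zero]
    · simpa using hK.zero_mem
  · exact (hK.nonempty_interior.preimage (Matrix.mulVec_surjective_iff_isUnit.2 hP)).mono
      (preimage_interior_subset_interior_preimage hcont)

lemma IsProperCone.mul_nonneg_of_smul_mem (hK : IsProperCone K) {u : Fin m → ℝ} (hu : u ≠ 0)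
    {a b : ℝ} (ha : a • u ∈ K) (hb : b • u ∈ K) : 0 ≤ a * b := by
  by_contra! hab
  have hpos : (b ^ 2 * a) • u ∈ K := by
    simpa only [smul_smul] using hK.smul_mem_s8 (sq_nonneg b) ha
  have hneg : -((b ^ 2 * a) • u) ∈ K := by
    convert hK.smul_mem_s8 (neg_nonneg.2 hab.le) hb using 1
    module
  have hzero : b ^ 2 * a = 0 :=
    (smul_eq_zero.1 (hK.eq_zero_of_neg_mem_s8 hpos hneg)).resolve_right hu
  have : b * (a * b) = 0 := by linear_combination hzero
  rcases mul_eq_zero.1 this with rfl | h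
  · simp at hab
  · exact hab.ne h

lemma IsProperCone.exists_mem_apply_ne_zero (hK : IsProperCone K) (i : Fin m) :
    ∃ v ∈ K, v i ≠ 0 := by
  by_contra! h
  let H : Submodule ℝ (Fin m → ℝ) := LinearMap.ker (LinearMap.proj i)
  have hH : H = ⊤ :=
    H.eq_top_of_nonempty_interior' (hK.nonempty_interior.mono (interior_mono h))
  have : (Pi.single i 1 : Fin m → ℝ) ∈ H := hH ▸ Submodule.mem_top
  simp [H] at this

lemma IsProperCone.mem_of_forall_add_nat_smul_mem (hK : IsProperCone K) {v w : Fin m → ℝ}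
    (h : ∀ n : ℕ, v + (n : ℝ) • w ∈ K) : w ∈ K := by
  have hlim : Tendsto (fun n : ℕ => (1 / ((n : ℝ) + 1)) • v + w) atTop (𝓝 w) := by
    simpa using ((tendsto_one_div_add_atTop_nhds_zero_nat (𝕜 := ℝ)).smul_const v).add_const w
  refine hK.isClosed_s8.mem_of_tendsto hlim (Eventually.of_forall fun n => ?_)
  have hn : (n : ℝ) + 1 ≠ 0 := n.cast_add_one_ne_zero
  convert hK.smul_mem_s8 (a := 1 / ((n : ℝ) + 1)) (by positivity) (h (n + 1)) using 1
  rw [smul_add, smul_smul, Nat.cast_succ, one_div_mul_cancel hn, one_smul]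

lemma InvariantUnder.mul_s8 {A B : Matrix (Fin m) (Fin m) ℝ} (hA : InvariantUnder A K)
    (hB : InvariantUnder B K) : InvariantUnder (A * B) K := fun v hv => by
  simpa only [Matrix.mulVec_mulVec] using hA _ (hB v hv)

lemma IsProperCone.mem_of_mulVec_eq_smul_add (hK : IsProperCone K)
    {A : Matrix (Fin m) (Fin m) ℝ} (hA : InvariantUnder A K) {r : ℝ} (hr : 0 ≤ r)
    {v w : Fin m → ℝ} (hv : v ∈ K) (hAv : A *ᵥ v = r • v + w) (hAw : A *ᵥ w = r • w) :
    w ∈ K := by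
  rcases hr.eq_or_lt with rfl | hr
  · simpa [hAv] using hA v hv
  -- `A ^ n *ᵥ v = r ^ n • v + (n * r ^ (n - 1)) • w`
  have hiter : ∀ n : ℕ, v + (n : ℝ) • r⁻¹ • w ∈ K := fun n => by
    induction n with
    | zero => simpa using hv
    | succ n ih =>
      convert hK.smul_mem_s8 (inv_nonneg.2 hr.le) (hA _ ih) using 1
      rw [Matrix.mulVec_add, Matrix.mulVec_smul, Matrix.mulVec_smul, hAv, hAw, Nat.cast_succ]
      match_scalars <;> field_simp
      ring
  simpa [smul_smul, hr.ne'] using hK.smul_mem_s8 hr.le (hK.mem_of_forall_add_nat_smul_mem hiter)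

end ProperCone

section CommonCone

variable {m : ℕ} {S T : Set (Matrix (Fin m) (Fin m) ℝ)} {P : Matrix (Fin m) (Fin m) ℝ}

/-- Some proper cone is invariant under all the matrices in `S`. Using a set of matrices treats
pairs and whole families uniformly. -/
def HasCommonInvariantCone (S : Set (Matrix (Fin m) (Fin m) ℝ)) : Prop :=
  ∃ K, IsProperCone K ∧ ∀ A ∈ S, InvariantUnder A K

lemma hasCommonInvariantCone_pair {A B : Matrix (Fin m) (Fin m) ℝ} :
    HasCommonInvariantCone {A, B} ↔
      ∃ K, IsProperCone K ∧ InvariantUnder A K ∧ InvariantUnder B K := by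
  simp [HasCommonInvariantCone]

lemma hasCommonInvariantCone_range {ι : Type*} {A : ι → Matrix (Fin m) (Fin m) ℝ} :
    HasCommonInvariantCone (Set.range A) ↔
      ∃ K, IsProperCone K ∧ ∀ j, InvariantUnder (A j) K := by
  simp [HasCommonInvariantCone]

lemma HasCommonInvariantCone.of_semiconjBy (hT : HasCommonInvariantCone T) (hP : IsUnit P)
    (h : ∀ A ∈ S, ∃ B ∈ T, SemiconjBy P A B) : HasCommonInvariantCone S := by
  obtain ⟨K, hK, hinv⟩ := hT
  refine ⟨P.mulVec ⁻¹' K, hK.preimage_mulVec hP, fun A hA v hv => ?_⟩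
  obtain ⟨B, hB, hAB⟩ := h A hA
  rw [Set.mem_preimage, Matrix.mulVec_mulVec, hAB.eq, ← Matrix.mulVec_mulVec]
  exact hinv B hB _ hv

lemma hasCommonInvariantCone_setOf_nonneg :
    HasCommonInvariantCone {A : Matrix (Fin m) (Fin m) ℝ | ∀ i j, 0 ≤ A i j} :=
  ⟨Set.Ici 0, isProperCone_Ici_zero, fun _ hA _ hv i =>
    dotProduct_nonneg_of_nonneg (hA i) hv⟩

end CommonCone

/-- The normal form of a Vandergraft matrix whose dominant eigenvector is the first basis vector:
upper triangular, with the upper left entry as spectral radius. -/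
structure IsDominantUpperTriangular (A : Matrix (Fin 2) (Fin 2) ℝ) : Prop where
  lower_left : A 1 0 = 0
  abs_le : |A 1 1| ≤ A 0 0

lemma IsDominantUpperTriangular.nonneg {A : Matrix (Fin 2) (Fin 2) ℝ}
    (hA : IsDominantUpperTriangular A) : 0 ≤ A 0 0 :=
  (abs_nonneg _).trans hA.abs_le

lemma IsVandergraft.abs_trace_sub_rho2_le {A : Matrix (Fin 2) (Fin 2) ℝ} (hA : IsVandergraft A) :
    |A.trace - rho2 A| ≤ rho2 A := by
  have hsqrt := Real.sqrt_nonneg (A.trace ^ 2 - 4 * A.det)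
  have htrace := hA.2
  rw [abs_le, rho2]
  constructor <;> linarith

lemma IsVandergraft.isDominantUpperTriangular_conj {A : Matrix (Fin 2) (Fin 2) ℝ}
    (hA : IsVandergraft A) (P : (Matrix (Fin 2) (Fin 2) ℝ)ˣ)
    (hdom : A *ᵥ (P *ᵥ ![1, 0]) = rho2 A • (P *ᵥ ![1, 0])) :
    IsDominantUpperTriangular (P⁻¹.val * A * P.val) := by
  set B := P⁻¹.val * A * P.val with hB
  have hcol : B *ᵥ ![1, 0] = rho2 A • ![1, 0] := by
    rw [hB, ← Matrix.mulVec_mulVec, ← Matrix.mulVec_mulVec, hdom, Matrix.mulVec_smul,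
      Matrix.mulVec_mulVec, P.inv_mul, Matrix.one_mulVec]
  have h00 : B 0 0 = rho2 A := by simpa [Matrix.mulVec, dotProduct] using congrFun hcol 0
  have h10 : B 1 0 = 0 := by simpa [Matrix.mulVec, dotProduct] using congrFun hcol 1
  have htrace : B 0 0 + B 1 1 = A.trace := by
    rw [← Matrix.trace_fin_two, hB, mul_assoc, Matrix.trace_mul_comm, mul_assoc, P.mul_inv, mul_one]
  refine ⟨h10, ?_⟩
  rw [eq_sub_of_add_eq' htrace, h00]
  exact hA.abs_trace_sub_rho2_le

lemma exists_units_mulVec_eq {u : Fin 2 → ℝ} (hu : u ≠ 0) :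
    ∃ P : (Matrix (Fin 2) (Fin 2) ℝ)ˣ, P.val *ᵥ ![1, 0] = u := by
  have hdet : (!![u 0, -u 1; u 1, u 0]).det ≠ 0 := fun h => hu <| by
    rw [Matrix.det_fin_two_of] at h
    rw [neg_mul, sub_neg_eq_add, mul_self_add_mul_self_eq_zero] at h
    exact funext (Fin.forall_fin_two.2 h)
  refine ⟨((Matrix.isUnit_iff_isUnit_det _).2 hdet.isUnit).unit, ?_⟩
  ext i
  fin_cases i <;> simp

section Necessity

variable {K : Set (Fin 2 → ℝ)} {A B : Matrix (Fin 2) (Fin 2) ℝ}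

lemma IsProperCone.smul_mem_of_equal_diagonal (hK : IsProperCone K) (hA : InvariantUnder A K)
    (h10 : A 1 0 = 0) (h11 : A 1 1 = A 0 0) (h00 : 0 ≤ A 0 0) {v : Fin 2 → ℝ} (hv : v ∈ K) :
    (A 0 1 * v 1) • (![1, 0] : Fin 2 → ℝ) ∈ K := by
  refine hK.mem_of_mulVec_eq_smul_add hA h00 hv ?_ ?_ <;>
    ext i <;> fin_cases i <;> simp [Matrix.mulVec, dotProduct, h10, h11]

lemma IsProperCone.apply_one_one_nonneg (hK : IsProperCone K) (hA : InvariantUnder A K)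
    (hB : InvariantUnder B K) (hA10 : A 1 0 = 0) (hA11 : A 1 1 = A 0 0) (hA00 : 0 ≤ A 0 0)
    (hA01 : A 0 1 ≠ 0) (hB10 : B 1 0 = 0) : 0 ≤ B 1 1 := by
  obtain ⟨v, hv, hv1⟩ := hK.exists_mem_apply_ne_zero 1
  have hBv : (B *ᵥ v) 1 = B 1 1 * v 1 := by simp [Matrix.mulVec, dotProduct, hB10]
  have hsign := hK.mul_nonneg_of_smul_mem (by simp)
    (hK.smul_mem_of_equal_diagonal hA hA10 hA11 hA00 hv)
    (hK.smul_mem_of_equal_diagonal hA hA10 hA11 hA00 (hB v hv))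
  rw [hBv] at hsign
  refine nonneg_of_mul_nonneg_right (a := (A 0 1 * v 1) ^ 2) ?_ (by positivity)
  linarith

lemma IsProperCone.apply_zero_one_mul_nonneg (hK : IsProperCone K) (hA : InvariantUnder A K)
    (hB : InvariantUnder B K) (hA10 : A 1 0 = 0) (hA11 : A 1 1 = A 0 0) (hA00 : 0 ≤ A 0 0)
    (hB10 : B 1 0 = 0) (hB11 : B 1 1 = B 0 0) (hB00 : 0 ≤ B 0 0) : 0 ≤ A 0 1 * B 0 1 := by
  obtain ⟨v, hv, hv1⟩ := hK.exists_mem_apply_ne_zero 1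
  have hsign := hK.mul_nonneg_of_smul_mem (by simp)
    (hK.smul_mem_of_equal_diagonal hA hA10 hA11 hA00 hv)
    (hK.smul_mem_of_equal_diagonal hB hB10 hB11 hB00 hv)
  refine nonneg_of_mul_nonneg_right (a := v 1 ^ 2) ?_ (by positivity)
  linarith

lemma IsProperCone.mul_apply_zero_one_eq (hK : IsProperCone K) (hA : InvariantUnder A K)
    (hB : InvariantUnder B K) (hA10 : A 1 0 = 0) (hA11 : A 1 1 = -A 0 0) (hA00 : 0 < A 0 0)
    (hB10 : B 1 0 = 0) (hB11 : B 1 1 = -B 0 0) (hB00 : 0 ≤ B 0 0) :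
    A 0 0 * B 0 1 = B 0 0 * A 0 1 := by
  by_contra hne
  have hAB01 : (A * B) 0 1 ≠ 0 := fun h => hne <| by
    rw [Matrix.mul_apply, Fin.sum_univ_two, hB11] at h
    linarith
  have hA11_nonneg : 0 ≤ A 1 1 := by
    refine hK.apply_one_one_nonneg (hA.mul_s8 hB) hA ?_ ?_ ?_ hAB01 hA10 <;>
      simp [Matrix.mul_apply, hA10, hB10, hA11, hB11, mul_nonneg hA00.le hB00]
  linarith

end Necessity

section Sufficiency

variable {S : Set (Matrix (Fin 2) (Fin 2) ℝ)}

-- The cone is `{v | 0 ≤ β * v 1 ∧ M * (β * v 1) ≤ v 0}`, the preimage of the quadrant.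
lemma hasCommonInvariantCone_of_one_sided {β : ℝ} (hβ : β ≠ 0) (M : ℝ)
    (hS : ∀ A ∈ S, IsDominantUpperTriangular A) (hpos : ∀ A ∈ S, 0 ≤ A 1 1)
    (hM : ∀ A ∈ S, -(A 0 1 / β) ≤ M * (A 0 0 - A 1 1)) : HasCommonInvariantCone S := by
  have hP : IsUnit !![1, -(M * β); 0, β] := by
    simpa [Matrix.isUnit_iff_isUnit_det] using hβ
  refine hasCommonInvariantCone_setOf_nonneg.of_semiconjBy hP fun A hA =>
    ⟨!![A 0 0, A 0 1 / β + M * (A 0 0 - A 1 1); 0, A 1 1], ?_, ?_⟩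
  · simpa [Fin.forall_fin_two, (hS A hA).nonneg, hpos A hA] using
      neg_le_iff_add_nonneg'.1 (hM A hA)
  · have hentry : A 0 1 + -(M * β * A 1 1) =
        -(A 0 0 * (M * β)) + (A 0 1 / β + M * (A 0 0 - A 1 1)) * β := by
      field_simp
      ring
    ext i j
    fin_cases i <;> fin_cases j <;>
      simp [Matrix.mul_apply, (hS A hA).lower_left, hentry, mul_comm β (A 1 1)]

-- The cone is `{v | M * |v 1| ≤ v 0 + d * v 1}`, the preimage of the quadrant.
lemma hasCommonInvariantCone_of_two_sided {M : ℝ} (hM₀ : 0 < M) (d : ℝ)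
    (hS : ∀ A ∈ S, A 1 0 = 0)
    (hM : ∀ A ∈ S, |A 0 1 - d * (A 0 0 - A 1 1)| ≤ M * (A 0 0 - |A 1 1|)) :
    HasCommonInvariantCone S := by
  have hP : IsUnit !![1, d - M; 1, d + M] := by
    simpa [Matrix.isUnit_iff_isUnit_det, Matrix.det_fin_two_of] using hM₀.ne'
  refine hasCommonInvariantCone_setOf_nonneg.of_semiconjBy hP fun A hA => ?_
  set b := A 0 1 - d * (A 0 0 - A 1 1) with hb
  have hadd : |b| ≤ M * (A 0 0 + A 1 1) := (hM A hA).trans <| by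
    gcongr; linarith [neg_abs_le (A 1 1)]
  have hsub : |b| ≤ M * (A 0 0 - A 1 1) := (hM A hA).trans <| by
    gcongr; exact le_abs_self _
  refine ⟨(2 * M)⁻¹ • !![M * (A 0 0 + A 1 1) - b, M * (A 0 0 - A 1 1) + b;
    M * (A 0 0 - A 1 1) - b, M * (A 0 0 + A 1 1) + b], ?_, ?_⟩
  · have hb_le := abs_le.1 hadd
    have hb_le' := abs_le.1 hsub
    have hinv : 0 ≤ (2 * M)⁻¹ := by positivity
    intro i j
    rw [Matrix.smul_apply]
    refine smul_nonneg hinv ?_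
    fin_cases i <;> fin_cases j <;> simp <;> linarith
  · ext i j
    fin_cases i <;> fin_cases j <;>
      simp [Matrix.mul_apply, hS A hA, hb] <;> field_simp <;> ring

end Sufficiency

lemma exists_pos_forall_le_mul_s8 {α : Type*} {s : Set α} (hs : s.Finite) {f g : α → ℝ}
    (hg : ∀ a ∈ s, 0 ≤ g a) (hf : ∀ a ∈ s, g a = 0 → f a ≤ 0) :
    ∃ M : ℝ, 0 < M ∧ ∀ a ∈ s, f a ≤ M * g a := by
  have hlarge : ∀ᶠ M : ℝ in atTop, ∀ a ∈ s, f a ≤ M * g a := by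
    refine (eventually_all_finite hs).2 fun a ha => ?_
    rcases (hg a ha).eq_or_lt with hzero | hpos
    · exact Eventually.of_forall fun M => by
        rw [← hzero, mul_zero]
        exact hf a ha hzero.symm
    · filter_upwards [eventually_ge_atTop (f a / g a)] with M hM
      exact (div_le_iff₀ hpos).1 hM
  exact ((eventually_gt_atTop 0).and hlarge).exists

section Pairwise

variable {S : Set (Matrix (Fin 2) (Fin 2) ℝ)}

lemma hasCommonInvariantCone_of_pairwise_of_jordan (hfin : S.Finite)
    (hS : ∀ A ∈ S, IsDominantUpperTriangular A)
    (hpair : ∀ A ∈ S, ∀ B ∈ S, HasCommonInvariantCone {A, B})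
    {J : Matrix (Fin 2) (Fin 2) ℝ} (hJ : J ∈ S) (hJ11 : J 1 1 = J 0 0) (hJ01 : J 0 1 ≠ 0) :
    HasCommonInvariantCone S := by
  have hJ' := hS J hJ
  have hpos : ∀ A ∈ S, 0 ≤ A 1 1 := fun A hA => by
    obtain ⟨K, hK, hJK, hAK⟩ := hasCommonInvariantCone_pair.1 (hpair J hJ A hA)
    exact hK.apply_one_one_nonneg hJK hAK hJ'.lower_left hJ11 hJ'.nonneg hJ01 (hS A hA).lower_left
  have hsign : ∀ A ∈ S, A 0 0 - A 1 1 = 0 → -(A 0 1 / J 0 1) ≤ 0 := fun A hA hA11 => by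
    obtain ⟨K, hK, hJK, hAK⟩ := hasCommonInvariantCone_pair.1 (hpair J hJ A hA)
    have hprod := hK.apply_zero_one_mul_nonneg hAK hJK (hS A hA).lower_left
      (sub_eq_zero.1 hA11).symm (hS A hA).nonneg hJ'.lower_left hJ11 hJ'.nonneg
    exact neg_nonpos.2 (div_nonneg_iff.2 (mul_nonneg_iff.1 hprod))
  obtain ⟨M, -, hM⟩ := exists_pos_forall_le_mul_s8 hfin
    (fun A hA => sub_nonneg.2 ((le_abs_self _).trans (hS A hA).abs_le)) hsign
  exact hasCommonInvariantCone_of_one_sided hJ01 M hS hpos hM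

-- In the basis `(1, 0)`, `(-d, 1)`, every matrix of `S` with `|A 1 1| = A 0 0` is diagonal.
lemma exists_slope_of_pairwise_of_no_jordan (hS : ∀ A ∈ S, IsDominantUpperTriangular A)
    (hpair : ∀ A ∈ S, ∀ B ∈ S, HasCommonInvariantCone {A, B})
    (hJ : ∀ A ∈ S, A 1 1 = A 0 0 → A 0 1 = 0) :
    ∃ d : ℝ, ∀ A ∈ S, |A 1 1| = A 0 0 → A 0 1 = d * (A 0 0 - A 1 1) := by
  by_cases hR : ∃ R ∈ S, R 1 1 = -R 0 0 ∧ 0 < R 0 0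
  · obtain ⟨R, hRS, hR11, hR00⟩ := hR
    refine ⟨R 0 1 / (2 * R 0 0), fun A hA habs => ?_⟩
    rcases eq_or_eq_neg_of_abs_eq habs with hA11 | hA11
    · rw [hJ A hA hA11, hA11, sub_self, mul_zero]
    · obtain ⟨K, hK, hRK, hAK⟩ := hasCommonInvariantCone_pair.1 (hpair R hRS A hA)
      have heq := hK.mul_apply_zero_one_eq hRK hAK (hS R hRS).lower_left hR11 hR00
        (hS A hA).lower_left hA11 (hS A hA).nonneg
      rw [hA11]
      field_simp
      linarith
  · push Not at hR
    refine ⟨0, fun A hA habs => ?_⟩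
    rw [zero_mul]
    rcases eq_or_eq_neg_of_abs_eq habs with hA11 | hA11
    · exact hJ A hA hA11
    · exact hJ A hA (by linarith [hR A hA hA11, (hS A hA).nonneg])

lemma hasCommonInvariantCone_of_pairwise_of_no_jordan (hfin : S.Finite)
    (hS : ∀ A ∈ S, IsDominantUpperTriangular A)
    (hpair : ∀ A ∈ S, ∀ B ∈ S, HasCommonInvariantCone {A, B})
    (hJ : ∀ A ∈ S, A 1 1 = A 0 0 → A 0 1 = 0) : HasCommonInvariantCone S := by
  obtain ⟨d, hd⟩ := exists_slope_of_pairwise_of_no_jordan hS hpair hJ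
  obtain ⟨M, hM₀, hM⟩ := exists_pos_forall_le_mul_s8 hfin
    (f := fun A => |A 0 1 - d * (A 0 0 - A 1 1)|) (g := fun A => A 0 0 - |A 1 1|)
    (fun A hA => sub_nonneg.2 (hS A hA).abs_le)
    (fun A hA habs => by rw [hd A hA (sub_eq_zero.1 habs).symm, sub_self, abs_zero])
  exact hasCommonInvariantCone_of_two_sided hM₀ d (fun A hA => (hS A hA).lower_left) hM

theorem hasCommonInvariantCone_of_pairwise (hfin : S.Finite)
    (hS : ∀ A ∈ S, IsDominantUpperTriangular A)
    (hpair : ∀ A ∈ S, ∀ B ∈ S, HasCommonInvariantCone {A, B}) : HasCommonInvariantCone S := by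
  by_cases hJ : ∃ J ∈ S, J 1 1 = J 0 0 ∧ J 0 1 ≠ 0
  · obtain ⟨J, hJS, hJ11, hJ01⟩ := hJ
    exact hasCommonInvariantCone_of_pairwise_of_jordan hfin hS hpair hJS hJ11 hJ01
  · push Not at hJ
    exact hasCommonInvariantCone_of_pairwise_of_no_jordan hfin hS hpair hJ

end Pairwise

theorem common_invariant_cone_iff_pairwise_general {ι : Type*} [Finite ι]
    (A : ι → Matrix (Fin 2) (Fin 2) ℝ) (hV : ∀ j, IsVandergraft (A j))
    (u : Fin 2 → ℝ) (hu : u ≠ 0) (hdom : ∀ j, A j *ᵥ u = rho2 (A j) • u) :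
    (∃ K, IsProperCone K ∧ ∀ j, InvariantUnder (A j) K) ↔
      ∀ i j, ∃ K, IsProperCone K ∧ InvariantUnder (A i) K ∧ InvariantUnder (A j) K := by
  refine ⟨fun ⟨K, hK, hinv⟩ i j => ⟨K, hK, hinv i, hinv j⟩, fun hpair => ?_⟩
  simp only [← hasCommonInvariantCone_pair] at hpair
  rw [← hasCommonInvariantCone_range]
  obtain ⟨P, rfl⟩ := exists_units_mulVec_eq hu
  let B j := P⁻¹.val * A j * P.val
  have hPB : ∀ j, SemiconjBy P.val (B j) (A j) := fun j => by
    simp [SemiconjBy, B, ← mul_assoc]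
  have hB : HasCommonInvariantCone (Set.range B) := by
    refine hasCommonInvariantCone_of_pairwise (Set.finite_range B) ?_ ?_
    · rintro _ ⟨j, rfl⟩
      exact (hV j).isDominantUpperTriangular_conj P (hdom j)
    · rintro _ ⟨i, rfl⟩ _ ⟨j, rfl⟩
      refine (hpair i j).of_semiconjBy P.isUnit ?_
      simp [hPB]
  refine hB.of_semiconjBy P⁻¹.isUnit ?_
  rintro _ ⟨j, rfl⟩
  exact ⟨B j, Set.mem_range_self j, (hPB j).units_inv_symm_left⟩

/-- Theorem: for `2×2` Vandergraft matrices `A 1, …, A n` sharing the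
dominant eigenvector `u`, a common invariant proper cone exists iff every
pair of the matrices has a common invariant proper cone. -/
theorem common_invariant_cone_iff_pairwise
    (n : ℕ) (A : Fin n → Matrix (Fin 2) (Fin 2) ℝ)
    (hV : ∀ j, IsVandergraft (A j))
    (u : Fin 2 → ℝ) (hu : u ≠ 0)
    (hdom : ∀ j, (A j).mulVec u = rho2 (A j) • u) :
    (∃ K : Set (Fin 2 → ℝ), IsProperCone K ∧ ∀ j, InvariantUnder (A j) K) ↔
      ∀ i j : Fin n, ∃ K : Set (Fin 2 → ℝ),
        IsProperCone K ∧ InvariantUnder (A i) K ∧ InvariantUnder (A j) K :=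
  common_invariant_cone_iff_pairwise_general A hV u hu hdom
end
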